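/- arXiv:2307.06379 — 4 statements merged into one kernel-verified Lean document; each statement's English description precedes it below -/
import Mathlib

section
/- Let h ≥ 1 be an integer and let 0 < c < 1. For every graph G, either ind_{K_h}(G) ≥ c^{h(h+1)/2} |G|^h, or there exists S ⊆ V(G) with |S| ≥ c^{h(h−1)/2} |G| such that the induced subgraph G[S] has fewer than c|S|² edges. -/
/-!
Suppose every large `S` spans at least `c|S|²` edges, so that its internal degrees sum to at least
`2c|S|²`. Vertices of internal degree below `c|S|` contribute at most `c|S|²` to this sum and every
other vertex at most `|S|`, so at least `c|S|` vertices of `S` have at least `c|S|` neighbours in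
`S` (`many_large_degree`). A clique can therefore be built greedily: the first vertex is
any of these, and the remaining ones are found inside its neighbourhood in `S`. After `i` steps the
current set has size at least `cⁱ|G|`, hence the `i`-th vertex can be chosen in at least
`cⁱ|G|` ways, and the number of ordered `h`-cliques is at least
`c^(1 + 2 + ⋯ + h) |G|^h` (`clique_count`).
-/

open SimpleGraph

def IsInducedCopy {α β : Type} (H : SimpleGraph α) (G : SimpleGraph β) (f : α → β) : Prop :=
  Function.Injective f ∧ ∀ u v : α, G.Adj (f u) (f v) ↔ H.Adj u v

def Free {α β : Type} (H : SimpleGraph α) (G : SimpleGraph β) : Prop :=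
  ¬ ∃ f : α → β, IsInducedCopy H G f

def IsStable {V : Type} (G : SimpleGraph V) (S : Finset V) : Prop :=
  ∀ u ∈ S, ∀ v ∈ S, ¬ G.Adj u v

/-- The number of copies of `H` in `G`, i.e. of injections `f : V(H) → V(G)` such that
`uv ∈ E(H)` iff `f(u)f(v) ∈ E(G)`. -/
noncomputable def indCount {α V : Type} (H : SimpleGraph α) (G : SimpleGraph V) : ℕ :=
  Nat.card {f : α → V // IsInducedCopy H G f}

/-- The number of edges of the subgraph of `G` induced on `S`. -/
noncomputable def inducedEdgeCount {V : Type} (G : SimpleGraph V) (S : Finset V) : ℕ :=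
  Nat.card (SimpleGraph.induce (S : Set V) G).edgeSet

open Classical in
/-- The ordered `k`-cliques of `G` with all vertices in `S`. -/
noncomputable def orderedCliques {V : Type} [Fintype V] (G : SimpleGraph V) (k : ℕ)
    (S : Finset V) : Finset (Fin k → V) :=
  Finset.univ.filter fun f => (∀ i, f i ∈ S) ∧ ∀ i j, G.Adj (f i) (f j) ↔ i ≠ j

open Classical in
/-- The handshake identity inside `S`. -/
lemma sum_inner_degree {V : Type} (G : SimpleGraph V) (S : Finset V) :
    ∑ v ∈ S, (S.filter (G.Adj v)).card = 2 * inducedEdgeCount G S := by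
  have key := (SimpleGraph.induce (S : Set V) G).sum_degrees_eq_twice_card_edges
  have hcount : inducedEdgeCount G S =
      (SimpleGraph.induce (S : Set V) G).edgeFinset.card := by
    rw [inducedEdgeCount, Nat.card_eq_fintype_card, SimpleGraph.edgeFinset_card]
  rw [hcount, ← key, ← Finset.sum_coe_sort S]
  refine Finset.sum_congr rfl fun v _ => ?_
  rw [← SimpleGraph.card_neighborFinset_eq_degree]
  symm
  refine Finset.card_bij (fun w _ => (w : V)) ?_ ?_ ?_
  · intro w hw
    rw [SimpleGraph.mem_neighborFinset] at hw
    exact Finset.mem_filter.2 ⟨w.2, hw⟩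
  · intro a _ b _ hab
    exact Subtype.ext hab
  · intro w hw
    obtain ⟨hwS, hvw⟩ := Finset.mem_filter.1 hw
    exact ⟨⟨w, hwS⟩, (SimpleGraph.mem_neighborFinset _ _ _).2 hvw, rfl⟩

open Classical in
/-- If `S` spans at least `c|S|²` edges, at least `c|S|` of its vertices have at least `c|S|`
neighbours in `S`. -/
lemma many_large_degree {V : Type} (G : SimpleGraph V) (S : Finset V) {c : ℝ} (hc0 : 0 < c)
    (hS : c * (S.card : ℝ) ^ 2 ≤ inducedEdgeCount G S) :
    c * (S.card : ℝ) ≤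
      (S.filter fun v => c * (S.card : ℝ) ≤ ((S.filter (G.Adj v)).card : ℝ)).card := by
  set A := S.filter fun v => c * (S.card : ℝ) ≤ ((S.filter (G.Adj v)).card : ℝ) with hA
  rcases S.card.eq_zero_or_pos with h0 | hpos
  · simp [h0]
  have hpos' : (0 : ℝ) < S.card := by exact_mod_cast hpos
  have hsum : ∑ v ∈ S, ((S.filter (G.Adj v)).card : ℝ) = 2 * inducedEdgeCount G S := by
    exact_mod_cast sum_inner_degree G S
  have hle : ∑ v ∈ S, ((S.filter (G.Adj v)).card : ℝ) ≤
      ∑ v ∈ S, (c * (S.card : ℝ) + if c * (S.card : ℝ) ≤ ((S.filter (G.Adj v)).card : ℝ)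
        then (S.card : ℝ) else 0) := by
    refine Finset.sum_le_sum fun v _ => ?_
    split_ifs with hv
    · have h1 : ((S.filter (G.Adj v)).card : ℝ) ≤ S.card := by
        exact_mod_cast Finset.card_filter_le _ _
      have h2 : 0 < c * (S.card : ℝ) := by positivity
      linarith
    · linarith [not_le.1 hv]
  rw [Finset.sum_add_distrib, ← Finset.sum_filter, ← hA, Finset.sum_const, Finset.sum_const,
    nsmul_eq_mul, nsmul_eq_mul] at hle
  have : (c * (S.card : ℝ)) * S.card ≤ (A.card : ℝ) * S.card := by nlinarith
  exact le_of_mul_le_mul_right this hpos'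

open Classical in
/-- Prepending `v ∈ S` to an ordered `k`-clique in the neighbourhood of `v` within `S` gives an
ordered `(k+1)`-clique in `S`, and different choices give different cliques. -/
lemma sum_orderedCliques_le {V : Type} [Fintype V] (G : SimpleGraph V) (k : ℕ)
    (S A : Finset V) (hAS : A ⊆ S) :
    ∑ v ∈ A, (orderedCliques G k (S.filter (G.Adj v))).card ≤ (orderedCliques G (k + 1) S).card := by
  rw [← Finset.card_sigma]
  refine Finset.card_le_card_of_injOn
    (fun p => (Fin.cons p.1 p.2 : Fin (k + 1) → V)) ?_ ?_
  · rintro ⟨v, f⟩ hp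
    obtain ⟨hv, hf⟩ := Finset.mem_sigma.1 (Finset.mem_coe.1 hp)
    simp only [orderedCliques, Finset.mem_filter, Finset.mem_univ, true_and] at hf
    obtain ⟨hfS, hadj⟩ := hf
    simp only [orderedCliques, Finset.coe_filter, Finset.mem_univ, true_and, Set.mem_ofPred_eq]
    refine ⟨fun i => ?_, fun i j => ?_⟩
    · refine Fin.cases ?_ (fun i => ?_) i
      · simpa using hAS hv
      · simpa using (hfS i).1
    · refine Fin.cases ?_ (fun i => ?_) i <;> refine Fin.cases ?_ (fun j => ?_) j
      · simp
      · simpa [(Fin.succ_ne_zero j).symm] using (hfS j).2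
      · simpa [Fin.succ_ne_zero i] using (hfS i).2.symm
      · simpa using hadj i j
  · rintro ⟨v, f⟩ _ ⟨w, g⟩ _ hpq
    obtain ⟨rfl, rfl⟩ := Fin.cons_injective2 hpq
    rfl

/-- The greedy count of ordered `k`-cliques in `S`. Only subsets of size at least `c^(k-1)|S|` need
be dense; the threshold is multiplied by `c` so that the case `k = 0` makes sense. -/
lemma clique_count {V : Type} [Fintype V] (G : SimpleGraph V) {c : ℝ} (hc0 : 0 < c)
    (hc1 : c < 1) (k : ℕ) : ∀ S : Finset V,
    (∀ T ⊆ S, c ^ k * (S.card : ℝ) ≤ c * T.card →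
      c * (T.card : ℝ) ^ 2 ≤ inducedEdgeCount G T) →
    c ^ (k * (k + 1) / 2) * (S.card : ℝ) ^ k ≤ (orderedCliques G k S).card := by
  classical
  induction k with
  | zero =>
    intro S _
    have : (orderedCliques G 0 S).card = 1 := by
      simp [orderedCliques]
    simp [this]
  | succ k ih =>
    intro S hS
    have hSS : c * (S.card : ℝ) ^ 2 ≤ inducedEdgeCount G S := by
      refine hS S subset_rfl (mul_le_mul_of_nonneg_right ?_ (Nat.cast_nonneg _))
      exact pow_le_of_le_one hc0.le hc1.le (Nat.succ_ne_zero k)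
    have hA := many_large_degree G S hc0 hSS
    set A := S.filter fun v => c * (S.card : ℝ) ≤ ((S.filter (G.Adj v)).card : ℝ) with hAdef
    have hterm : ∀ v ∈ A, c ^ (k * (k + 1) / 2) * (c * (S.card : ℝ)) ^ k ≤
        ((orderedCliques G k (S.filter (G.Adj v))).card : ℝ) := by
      intro v hv
      have hdeg := (Finset.mem_filter.1 hv).2
      refine le_trans ?_ (ih (S.filter (G.Adj v)) fun T hT hTc => ?_)
      · gcongr
      · refine hS T (hT.trans (Finset.filter_subset _ _)) (le_trans ?_ hTc)
        rw [pow_succ, mul_assoc]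
        gcongr
    have hsum : ∑ v ∈ A, ((orderedCliques G k (S.filter (G.Adj v))).card : ℝ) ≤
        (orderedCliques G (k + 1) S).card := by
      exact_mod_cast sum_orderedCliques_le G k S A (Finset.filter_subset _ _)
    have hexp : (k + 1) * (k + 1 + 1) / 2 = k * (k + 1) / 2 + (k + 1) := by
      rw [show (k + 1) * (k + 1 + 1) = k * (k + 1) + (k + 1) * 2 by ring,
        Nat.add_mul_div_right _ _ two_pos]
    calc c ^ ((k + 1) * (k + 1 + 1) / 2) * (S.card : ℝ) ^ (k + 1)
        = (c * S.card) * (c ^ (k * (k + 1) / 2) * (c * (S.card : ℝ)) ^ k) := by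
          rw [hexp]; ring
      _ ≤ A.card * (c ^ (k * (k + 1) / 2) * (c * (S.card : ℝ)) ^ k) := by gcongr
      _ = ∑ v ∈ A, c ^ (k * (k + 1) / 2) * (c * (S.card : ℝ)) ^ k := by
          rw [Finset.sum_const, nsmul_eq_mul]
      _ ≤ _ := (Finset.sum_le_sum hterm).trans hsum

lemma card_orderedCliques_univ {V : Type} [Fintype V] (G : SimpleGraph V) (h : ℕ) :
    (orderedCliques G h Finset.univ).card = indCount (⊤ : SimpleGraph (Fin h)) G := by
  classical
  rw [indCount, Nat.card_eq_fintype_card, Fintype.card_subtype, orderedCliques]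
  congr 1
  refine Finset.filter_congr fun f _ => ?_
  simp only [IsInducedCopy, Finset.mem_univ, implies_true, true_and, SimpleGraph.top_adj]
  refine ⟨fun hf => ⟨fun i j hij => ?_, hf⟩, fun hf => hf.2⟩
  by_contra hne
  exact (hij ▸ (hf i j).2 hne).ne rfl

theorem stmt10 (h : ℕ) (hh : 1 ≤ h) (c : ℝ) (hc0 : 0 < c) (hc1 : c < 1)
    (V : Type) [Fintype V] (G : SimpleGraph V) :
    (c ^ (h * (h + 1) / 2) * (Fintype.card V : ℝ) ^ h ≤
        indCount (⊤ : SimpleGraph (Fin h)) G) ∨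
    (∃ S : Finset V, c ^ (h * (h - 1) / 2) * (Fintype.card V : ℝ) ≤ S.card ∧
      (inducedEdgeCount G S : ℝ) < c * (S.card : ℝ) ^ 2) := by
  by_cases hd : ∃ S : Finset V, c ^ (h * (h - 1) / 2) * (Fintype.card V : ℝ) ≤ S.card ∧
      (inducedEdgeCount G S : ℝ) < c * (S.card : ℝ) ^ 2
  · exact Or.inr hd
  · left
    push Not at hd
    rw [← card_orderedCliques_univ, ← Finset.card_univ]
    refine clique_count G hc0 hc1 h Finset.univ fun T _ hT => hd T ?_
    obtain ⟨k, rfl⟩ : ∃ k, h = k + 1 := ⟨h - 1, by omega⟩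
    rw [Finset.card_univ, pow_succ', mul_assoc] at hT
    refine le_trans ?_ (le_of_mul_le_mul_left hT hc0)
    refine mul_le_mul_of_nonneg_right ?_ (Nat.cast_nonneg _)
    refine pow_le_pow_of_le_one hc0.le hc1.le ?_
    -- `k ≤ (k + 1) * k / 2`: trivial for `k = 0`, and otherwise `2 ≤ k + 1`.
    rw [Nat.add_sub_cancel, Nat.le_div_iff_mul_le two_pos]
    rcases Nat.eq_zero_or_pos k with rfl | hk
    · simp
    · nlinarith
end

section
/- Let H be a graph with h ≥ 1 vertices, and let 0 < ε < 1/4. Let G be a graph with ind_H(G) < (ε^h |G|)^h. Then either there exists S ⊆ V(G) with |S| ≥ ε^{h(h−1)/2} |G| such that G[S] has fewer than ε|S|² edges, or there exist disjoint W₁, W₂ ⊆ V(G) with |W₁|, |W₂| ≥ 2(ε/2)^{h²} |G| such that there are fewer than ε|W₁|·|W₂| nonedges between W₁ and W₂. -/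
/-!
Suppose neither outcome holds: every set `S` with `|S| ≥ ε ^ (h(h-1)/2) n` spans at least `ε|S|²`
edges, and any two disjoint sets of size at least `w = 2(ε/2)^(h²) n` have at least `ε|W₁||W₂|`
nonedges between them. The copies of `H` are then counted from below in two stages.

* The first condition gives many cliques: every large set `A` has many vertices of degree at least
  `ε|A|` inside `A`, and recursing into their neighbourhoods produces at least
  `ε ^ (h choose 2) n ^ h` ordered `h`-cliques (`clique_lower`), that is, copies of the complete
  graph on the vertex set of `H`.
* The edges of the complete graph missing from `H` are then deleted one at a time. Let `Q` have the
  edge `uv` and let `P` be `Q` without it. Fixing the images of all vertices except `u` and `v`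
  leaves candidate sets `X` and `Y`; copies of `Q` correspond to edges between `X` and `Y`, copies
  of `P` to nonedges. By the second condition, the number of nonedges is at least `ε` times the
  number of edges, up to an additive error `4εwn` (`pair_lower`). Since `X` and `Y` may overlap,
  this is proved by averaging over all bipartitions `(U, V \ U)` of the vertex set. Hence
  `ind_P ≥ ε (ind_Q - 4 w n ^ (h-1))` (`swap_lower`).

At most `h choose 2` deletions are needed, so `ind_H ≥ ε ^ (h(h-1)) n ^ h - 2 w n ^ (h-1)`, which is
at least `(ε ^ h n) ^ h` because `w ≤ ε ^ (h²) n` and `ε ^ h < 1/4`.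
-/

open SimpleGraph

/-- The number of nonedges between `W₁` and `W₂`: pairs `(u, v)` with `u ∈ W₁`, `v ∈ W₂`
and `uv ∉ E(G)`. -/
noncomputable def nonedgeCount {V : Type} (G : SimpleGraph V) (W₁ W₂ : Finset V) : ℕ :=
  Nat.card {p : V × V // p.1 ∈ W₁ ∧ p.2 ∈ W₂ ∧ ¬ G.Adj p.1 p.2}

/-! ### Nonedges between overlapping sets -/

open Finset in
lemma four_mul_card_separating {V : Type} [Fintype V] [DecidableEq V] (x y : V) (hxy : x ≠ y) :
    4 * #{U : Finset V | x ∈ U ∧ y ∉ U} = 2 ^ Fintype.card V := by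
  have h1 : ({U : Finset V | x ∈ U ∧ y ∉ U} : Finset (Finset V)) = Finset.Icc {x} {y}ᶜ := by
    ext U
    simp only [mem_filter, mem_univ, true_and, Finset.mem_Icc,
      singleton_subset_iff, subset_compl_singleton]
  have h3 : 2 ≤ Fintype.card V := by
    simpa [Finset.card_pair hxy] using Finset.card_le_univ ({x, y} : Finset V)
  rw [h1, Finset.card_Icc_finset (by simpa using hxy.symm), card_compl, card_singleton,
    card_singleton]
  obtain ⟨k, hk⟩ := Nat.exists_eq_add_of_le h3
  rw [hk, show 2 + k - 1 - 1 = k by omega, pow_add]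
  norm_num

open Finset Classical in
lemma nonedgeCount_eq {V : Type} [Fintype V] (G : SimpleGraph V) (W₁ W₂ : Finset V) :
    nonedgeCount G W₁ W₂ = #{p ∈ W₁ ×ˢ W₂ | ¬ G.Adj p.1 p.2} := by
  unfold nonedgeCount
  rw [Nat.card_eq_fintype_card, Fintype.card_subtype]
  congr 1
  ext p
  simp [and_assoc]

open Finset Classical in
/-- If large disjoint pairs have nonedge density at least `ε`, then between arbitrary, possibly
overlapping, sets the nonedges number at least `ε` times the edges, up to an additive error. -/
lemma pair_lower {V : Type} [Fintype V] (G : SimpleGraph V) (ε w : ℝ) (hε : 0 < ε) (hw : 0 ≤ w)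
    (hW : ∀ W₁ W₂ : Finset V, Disjoint W₁ W₂ → w ≤ #W₁ → w ≤ #W₂ →
      ε * #W₁ * #W₂ ≤ (nonedgeCount G W₁ W₂ : ℝ)) (X Y : Finset V) :
    ε * ((#{p ∈ X ×ˢ Y | G.Adj p.1 p.2} : ℝ) - 4 * w * Fintype.card V) ≤
      #{p ∈ X ×ˢ Y | p.1 ≠ p.2 ∧ ¬ G.Adj p.1 p.2} := by
  set n : ℝ := (Fintype.card V : ℝ) with hn
  have hle : ∀ S : Finset V, (#S : ℝ) ≤ n := fun S => by
    rw [hn]; exact_mod_cast Finset.card_le_univ S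
  have hn0 : 0 ≤ n := by positivity
  -- The sets `X ∩ U` and `Y \ U` are disjoint, and if one of them has size less than `w` then the
  -- left-hand side is not positive.
  have key : ∀ U : Finset V,
      ε * ((#{p ∈ X ×ˢ Y | p.1 ∈ U ∧ p.2 ∉ U} : ℝ) - w * n) ≤
        #{p ∈ X ×ˢ Y | (p.1 ∈ U ∧ p.2 ∉ U) ∧ ¬ G.Adj p.1 p.2} := by
    intro U
    have hd : Disjoint (X ∩ U) (Y \ U) := by
      rw [Finset.disjoint_left]; intro a ha hb; simp at ha hb; exact hb.2 ha.2
    have e1 : ({p ∈ X ×ˢ Y | p.1 ∈ U ∧ p.2 ∉ U} : Finset (V × V)) = (X ∩ U) ×ˢ (Y \ U) := by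
      ext p; simp; tauto
    have e2 : ({p ∈ X ×ˢ Y | (p.1 ∈ U ∧ p.2 ∉ U) ∧ ¬ G.Adj p.1 p.2} : Finset (V × V)) =
        {p ∈ (X ∩ U) ×ˢ (Y \ U) | ¬ G.Adj p.1 p.2} := by
      ext p; simp; tauto
    rw [e1, e2, ← nonedgeCount_eq, card_product]
    push_cast
    have h1 := hle (X ∩ U)
    have h2 := hle (Y \ U)
    have p1 : (0 : ℝ) ≤ #(X ∩ U) := by positivity
    have p2 : (0 : ℝ) ≤ #(Y \ U) := by positivity
    have p3 : (0 : ℝ) ≤ nonedgeCount G (X ∩ U) (Y \ U) := by positivity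
    by_cases c1 : w ≤ #(X ∩ U)
    · by_cases c2 : w ≤ #(Y \ U)
      · have := hW _ _ hd c1 c2
        have : 0 ≤ ε * (w * n) := by positivity
        nlinarith
      · have : (#(X ∩ U) : ℝ) * #(Y \ U) ≤ n * w :=
          mul_le_mul h1 (not_le.1 c2).le p2 hn0
        nlinarith
    · have : (#(X ∩ U) : ℝ) * #(Y \ U) ≤ w * n :=
        mul_le_mul (not_le.1 c1).le h2 p2 hw
      nlinarith
  have hsum := Finset.sum_le_sum (fun U (_ : U ∈ (univ : Finset (Finset V))) => key U)
  rw [← Finset.mul_sum, Finset.sum_sub_distrib] at hsum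
  simp only [sum_const, card_univ, Fintype.card_finset, nsmul_eq_mul] at hsum
  have swap : ∀ R : V × V → Prop,
      ∑ U : Finset V, (#{p ∈ X ×ˢ Y | (p.1 ∈ U ∧ p.2 ∉ U) ∧ R p} : ℝ) =
        ∑ p ∈ X ×ˢ Y with R p, (#{U : Finset V | p.1 ∈ U ∧ p.2 ∉ U} : ℝ) := by
    intro R
    have := Finset.sum_card_bipartiteAbove_eq_sum_card_bipartiteBelow
      (s := (univ : Finset (Finset V))) (t := {p ∈ X ×ˢ Y | R p})
      (fun U p => p.1 ∈ U ∧ p.2 ∉ U)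
    simp only [bipartiteAbove, bipartiteBelow, filter_filter] at this
    rw [← Nat.cast_sum, ← Nat.cast_sum, ← this]
    congr 1
    refine Finset.sum_congr rfl fun U _ => ?_
    congr 1
    ext p
    simp
    tauto
  -- Exactly a quarter of all sets `U` separate a given pair of distinct vertices in this order.
  have hcard : ∀ p : V × V, p.1 ≠ p.2 →
      (#{U : Finset V | p.1 ∈ U ∧ p.2 ∉ U} : ℝ) = 2 ^ Fintype.card V / 4 := by
    intro p hp
    have := four_mul_card_separating p.1 p.2 hp
    have h' : (4 : ℝ) * (#{U : Finset V | p.1 ∈ U ∧ p.2 ∉ U} : ℝ) = 2 ^ Fintype.card V := by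
      exact_mod_cast this
    linarith
  have hA : (#{p ∈ X ×ˢ Y | G.Adj p.1 p.2} : ℝ) * (2 ^ Fintype.card V / 4) ≤
      ∑ U : Finset V, (#{p ∈ X ×ˢ Y | p.1 ∈ U ∧ p.2 ∉ U} : ℝ) := by
    have := swap (fun _ => True)
    simp only [and_true] at this
    rw [this, ← nsmul_eq_mul, ← sum_const]
    refine le_trans (Finset.sum_le_sum fun p hp => ?_)
      (Finset.sum_le_sum_of_subset_of_nonneg (s := {p ∈ X ×ˢ Y | G.Adj p.1 p.2}) ?_ ?_)
    · exact (hcard p (by simp at hp; exact hp.2.ne)).ge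
    · intro p; simp; tauto
    · intros; positivity
  have hB : ∑ U : Finset V, (#{p ∈ X ×ˢ Y | (p.1 ∈ U ∧ p.2 ∉ U) ∧ ¬ G.Adj p.1 p.2} : ℝ) =
      (#{p ∈ X ×ˢ Y | p.1 ≠ p.2 ∧ ¬ G.Adj p.1 p.2} : ℝ) * (2 ^ Fintype.card V / 4) := by
    have hs : ∑ U : Finset V, (#{p ∈ X ×ˢ Y | (p.1 ∈ U ∧ p.2 ∉ U) ∧ ¬ G.Adj p.1 p.2} : ℝ) =
        ∑ p ∈ X ×ˢ Y with ¬ G.Adj p.1 p.2, (#{U : Finset V | p.1 ∈ U ∧ p.2 ∉ U} : ℝ) := by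
      convert swap (fun p => ¬ G.Adj p.1 p.2)
    rw [hs, ← nsmul_eq_mul, ← sum_const]
    symm
    rw [← Finset.filter_filter, Finset.filter_comm, Finset.sum_filter (fun p : V × V => p.1 ≠ p.2)]
    refine Finset.sum_congr rfl fun p _ => ?_
    split_ifs with hp
    · exact (hcard p hp).symm
    · rw [not_not] at hp
      rw [hp]; simp
  rw [hB] at hsum
  have hpow : (0 : ℝ) < 2 ^ Fintype.card V := by positivity
  push_cast at hsum
  refine le_of_mul_le_mul_right ?_ (show (0 : ℝ) < 2 ^ Fintype.card V / 4 by positivity)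
  refine le_trans ?_ hsum
  rw [mul_assoc]
  refine mul_le_mul_of_nonneg_left ?_ hε.le
  linarith

/-! ### Deleting an edge from the pattern -/

open Finset in
/-- Resampling one coordinate: `(f, x) ↦ (update f u x, f u)` is an involution. -/
lemma sum_update {α V : Type} [Fintype α] [DecidableEq α] [Fintype V] (u : α)
    (F : (α → V) → ℝ) :
    ∑ f : α → V, ∑ x : V, F (Function.update f u x) = Fintype.card V * ∑ f : α → V, F f := by
  have h1 : (Fintype.card V : ℝ) * ∑ f : α → V, F f = ∑ f : α → V, ∑ _x : V, F f := by
    simp [Finset.mul_sum]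
  rw [h1, ← Fintype.sum_prod_type', ← Fintype.sum_prod_type']
  refine Finset.sum_nbij' (fun p => (Function.update p.1 u p.2, p.1 u))
    (fun p => (Function.update p.1 u p.2, p.1 u)) ?_ ?_ ?_ ?_ ?_ <;> simp

open Finset in
lemma sum_update₂ {α V : Type} [Fintype α] [DecidableEq α] [Fintype V] (u v : α)
    (F : (α → V) → ℝ) :
    ∑ f : α → V, ∑ x : V, ∑ y : V, F (Function.update (Function.update f u x) v y) =
      (Fintype.card V : ℝ) ^ 2 * ∑ f : α → V, F f := by
  rw [sum_update u (fun g => ∑ y : V, F (Function.update g v y)), sum_update v F]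
  ring

open Finset Classical in
lemma indCount_eq_sum {α V : Type} [Fintype α] [Fintype V] (P : SimpleGraph α)
    (G : SimpleGraph V) :
    (indCount P G : ℝ) = ∑ f : α → V, if IsInducedCopy P G f then (1 : ℝ) else 0 := by
  unfold indCount
  rw [Nat.card_eq_fintype_card, Fintype.card_subtype, Finset.sum_boole]

/-- Once the images of all vertices but `u` and `v` are fixed, the copies of `Q` (in which `uv` is
an edge) come from edges between two candidate sets, and nonedges between these sets give copies of
`P` (which differs from `Q` only in that `uv` is not an edge). -/
lemma exists_candidates {α V : Type} [Fintype V] [DecidableEq α]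
    (G : SimpleGraph V) (P Q : SimpleGraph α) (u v : α) (huv : u ≠ v) (hQ : Q.Adj u v)
    (hP : ¬ P.Adj u v)
    (hPQ : ∀ a b, ¬ (a = u ∧ b = v) → ¬ (a = v ∧ b = u) → (Q.Adj a b ↔ P.Adj a b))
    (f : α → V) :
    ∃ X Y : Finset V, ∀ x y,
      (IsInducedCopy Q G (Function.update (Function.update f u x) v y) →
        x ∈ X ∧ y ∈ Y ∧ G.Adj x y) ∧
      (x ∈ X → y ∈ Y → x ≠ y → ¬ G.Adj x y →
        IsInducedCopy P G (Function.update (Function.update f u x) v y)) := by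
  classical
  let R : Prop := ∀ a b, a ≠ u → a ≠ v → b ≠ u → b ≠ v →
    (f a = f b → a = b) ∧ (G.Adj (f a) (f b) ↔ P.Adj a b)
  let C : α → V → Prop := fun t x => ∀ a, a ≠ u → a ≠ v → x ≠ f a ∧ (G.Adj x (f a) ↔ P.Adj t a)
  refine ⟨Finset.univ.filter fun x => R ∧ C u x, Finset.univ.filter fun y => R ∧ C v y, ?_⟩
  intro x y
  have gu : Function.update (Function.update f u x) v y u = x := by
    rw [Function.update_of_ne huv, Function.update_self]
  have gv : Function.update (Function.update f u x) v y v = y := by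
    rw [Function.update_self]
  have ga : ∀ a, a ≠ u → a ≠ v → Function.update (Function.update f u x) v y a = f a := by
    intro a h1 h2
    rw [Function.update_of_ne h2, Function.update_of_ne h1]
  generalize Function.update (Function.update f u x) v y = g at gu gv ga
  simp only [Finset.mem_filter, Finset.mem_univ, true_and]
  constructor
  · rintro ⟨hinj, hadj⟩
    have hR : R := by
      intro a b h1 h2 h3 h4
      have := hadj a b
      rw [hPQ a b (fun h => h1 h.1) (fun h => h2 h.1), ga a h1 h2, ga b h3 h4] at this
      refine ⟨fun h => hinj ?_, this⟩
      rw [ga a h1 h2, ga b h3 h4, h]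
    refine ⟨⟨hR, ?_⟩, ⟨hR, ?_⟩, ?_⟩
    · intro a h1 h2
      have := hadj u a
      rw [hPQ u a (fun h => h2 h.2) (fun h => h1 h.2), ga a h1 h2, gu] at this
      refine ⟨fun h => h1 (hinj ?_), this⟩
      rw [gu, ga a h1 h2, h]
    · intro a h1 h2
      have := hadj v a
      rw [hPQ v a (fun h => h2 h.2) (fun h => h1 h.2), ga a h1 h2, gv] at this
      refine ⟨fun h => h2 (hinj ?_), this⟩
      rw [gv, ga a h1 h2, h]
    · have := (hadj u v).2 hQ
      rwa [gu, gv] at this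
  · rintro ⟨hR, hX⟩ ⟨-, hY⟩ hxy hnadj
    have hP' : ¬ P.Adj v u := fun h => hP h.symm
    have hnadj' : ¬ G.Adj y x := fun h => hnadj h.symm
    have main : ∀ a b, (g a = g b → a = b) ∧ (G.Adj (g a) (g b) ↔ P.Adj a b) := by
      intro a b
      by_cases hau : a = u
      · subst hau
        by_cases hbu : b = a
        · subst hbu; simp
        by_cases hbv : b = v
        · subst hbv; rw [gu, gv]; simp [hxy, hnadj, hP]
        · rw [gu, ga b hbu hbv]
          exact ⟨fun h => absurd h (hX b hbu hbv).1, (hX b hbu hbv).2⟩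
      by_cases hav : a = v
      · subst hav
        by_cases hbv : b = a
        · subst hbv; simp
        by_cases hbu : b = u
        · subst hbu; rw [gu, gv]; simp [hxy.symm, hnadj', hP']
        · rw [gv, ga b hbu hbv]
          exact ⟨fun h => absurd h (hY b hbu hbv).1, (hY b hbu hbv).2⟩
      rw [ga a hau hav]
      by_cases hbu : b = u
      · subst hbu
        rw [gu, G.adj_comm, P.adj_comm]
        exact ⟨fun h => absurd h.symm (hX a hau hav).1, (hX a hau hav).2⟩
      by_cases hbv : b = v
      · subst hbv
        rw [gv, G.adj_comm, P.adj_comm]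
        exact ⟨fun h => absurd h.symm (hY a hau hav).1, (hY a hau hav).2⟩
      rw [ga b hbu hbv]
      exact hR a b hau hav hbu hbv
    exact ⟨fun a b h => (main a b).1 h, fun a b => (main a b).2⟩

open Finset in
/-- Deleting one edge from the pattern costs a factor `ε`, up to an additive error. -/
lemma swap_lower {α V : Type} [Fintype α] [Fintype V] [Nonempty V]
    (G : SimpleGraph V) (ε w : ℝ) (hε : 0 < ε) (hw : 0 ≤ w)
    (hW : ∀ W₁ W₂ : Finset V, Disjoint W₁ W₂ → w ≤ #W₁ → w ≤ #W₂ →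
      ε * #W₁ * #W₂ ≤ (nonedgeCount G W₁ W₂ : ℝ))
    (P Q : SimpleGraph α) (u v : α) (huv : u ≠ v) (hQ : Q.Adj u v)
    (hP : ¬ P.Adj u v)
    (hPQ : ∀ a b, ¬ (a = u ∧ b = v) → ¬ (a = v ∧ b = u) → (Q.Adj a b ↔ P.Adj a b)) :
    ε * ((indCount Q G : ℝ) - 4 * w * (Fintype.card V : ℝ) ^ (Fintype.card α - 1)) ≤
      indCount P G := by
  classical
  set n : ℝ := (Fintype.card V : ℝ) with hn
  have hn0 : 0 < n := by rw [hn]; exact_mod_cast Fintype.card_pos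
  have key : ∀ f : α → V,
      ε * ((∑ x : V, ∑ y : V,
        if IsInducedCopy Q G (Function.update (Function.update f u x) v y) then (1 : ℝ) else 0)
          - 4 * w * n) ≤
      ∑ x : V, ∑ y : V,
        if IsInducedCopy P G (Function.update (Function.update f u x) v y) then (1 : ℝ) else 0 := by
    intro f
    obtain ⟨X, Y, hXY⟩ := exists_candidates G P Q u v huv hQ hP hPQ f
    have hprod : ∀ F : V → V → ℝ, ∑ x, ∑ y, F x y = ∑ p : V × V, F p.1 p.2 :=
      fun F => (Fintype.sum_prod_type' F).symm
    rw [hprod, hprod, Finset.sum_boole, Finset.sum_boole]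
    refine le_trans ?_ (le_trans (pair_lower G ε w hε hw hW X Y) ?_)
    · refine mul_le_mul_of_nonneg_left ?_ hε.le
      refine sub_le_sub_right ?_ _
      norm_cast
      refine Finset.card_le_card fun p hp => ?_
      simp only [mem_filter, mem_univ, true_and, mem_product] at hp ⊢
      have := (hXY p.1 p.2).1 hp
      tauto
    · norm_cast
      refine Finset.card_le_card fun p hp => ?_
      simp only [mem_filter, mem_univ, true_and, mem_product] at hp ⊢
      exact (hXY p.1 p.2).2 hp.1.1 hp.1.2 hp.2.1 hp.2.2
  have hsum := Finset.sum_le_sum (fun f (_ : f ∈ (univ : Finset (α → V))) => key f)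
  rw [← Finset.mul_sum, Finset.sum_sub_distrib,
    sum_update₂ u v (fun g => if IsInducedCopy Q G g then (1 : ℝ) else 0),
    sum_update₂ u v (fun g => if IsInducedCopy P G g then (1 : ℝ) else 0),
    ← indCount_eq_sum, ← indCount_eq_sum] at hsum
  simp only [sum_const, card_univ, Fintype.card_fun, nsmul_eq_mul, Nat.cast_pow] at hsum
  rw [← hn] at hsum
  have hα : 0 < Fintype.card α := Fintype.card_pos_iff.2 ⟨u⟩
  obtain ⟨k, hk⟩ := Nat.exists_eq_add_of_lt hα
  rw [hk] at hsum ⊢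
  simp only [zero_add, Nat.add_sub_cancel] at hsum ⊢
  refine le_of_mul_le_mul_left ?_ (show (0 : ℝ) < n ^ 2 by positivity)
  refine le_trans (le_of_eq ?_) hsum
  ring

/-! ### Counting cliques -/

open Finset Classical in
/-- Ordered `j`-cliques of `G` inside `A`. -/
noncomputable def cliqueTuples {V : Type} [Fintype V] (G : SimpleGraph V) (j : ℕ) (A : Finset V) :
    Finset (Fin j → V) :=
  {f | (∀ i, f i ∈ A) ∧ ∀ i k, i < k → G.Adj (f i) (f k)}

open Finset Classical in
lemma cliqueTuples_succ {V : Type} [Fintype V] (G : SimpleGraph V) (j : ℕ) (A : Finset V) :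
    ∑ v ∈ A, #(cliqueTuples G j {x ∈ A | G.Adj v x}) ≤ #(cliqueTuples G (j + 1) A) := by
  rw [← Finset.card_sigma]
  refine Finset.card_le_card_of_injOn (fun p => (Fin.cons p.1 p.2 : Fin (j + 1) → V)) ?_ ?_
  · rintro ⟨v, f⟩ hp
    simp only [cliqueTuples, coe_sigma, Set.mem_sigma_iff, mem_coe, mem_filter, mem_univ,
      true_and] at hp ⊢
    obtain ⟨hv, hf, hf'⟩ := hp
    refine ⟨fun i => ?_, fun i k hik => ?_⟩
    · refine Fin.cases ?_ (fun i => ?_) i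
      · simpa using hv
      · simpa using (hf i).1
    · induction i using Fin.cases with
      | zero =>
        induction k using Fin.cases with
        | zero => exact absurd hik (lt_irrefl _)
        | succ k => simpa using (hf k).2
      | succ i =>
        induction k using Fin.cases with
        | zero => exact absurd hik (Fin.not_lt_zero _)
        | succ k => simpa using hf' i k (by simpa using hik)
  · rintro ⟨v, f⟩ - ⟨v', f'⟩ - h
    obtain ⟨h1, h2⟩ := Fin.cons_inj.1 h
    subst h1; subst h2; rfl

open Finset Classical in
lemma sum_degree_eq {V : Type} [Fintype V] (G : SimpleGraph V) (A : Finset V) :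
    ∑ v ∈ A, #{x ∈ A | G.Adj v x} = 2 * inducedEdgeCount G A := by
  have h := (SimpleGraph.induce (A : Set V) G).sum_degrees_eq_twice_card_edges
  have e : inducedEdgeCount G A = #(SimpleGraph.induce (A : Set V) G).edgeFinset := by
    unfold inducedEdgeCount
    rw [Nat.card_eq_fintype_card, SimpleGraph.edgeFinset_card]
  rw [e, ← h, ← Finset.sum_coe_sort]
  refine Finset.sum_congr rfl fun v _ => ?_
  rw [← SimpleGraph.card_neighborFinset_eq_degree]
  symm
  refine Finset.card_bij (fun x _ => (x : V)) ?_ ?_ ?_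
  · intro x hx
    simp at hx ⊢
    exact hx
  · intro x _ y _ hxy
    exact Subtype.ext hxy
  · intro x hx
    simp only [mem_filter] at hx
    exact ⟨⟨x, hx.1⟩, by simpa using hx.2, rfl⟩

open Finset Classical in
/-- If no set of size at least `m` is `ε`-sparse, then a large set contains many cliques. The
vertices of degree less than `ε|A|` in `A` account for at most half of the degree sum, so they
can be discarded before recursing into neighbourhoods. -/
lemma clique_lower {V : Type} [Fintype V] (G : SimpleGraph V) (ε m : ℝ) (hε : 0 < ε)
    (hε1 : ε ≤ 1) (hS : ∀ S : Finset V, m ≤ #S → ε * (#S : ℝ) ^ 2 ≤ inducedEdgeCount G S)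
    (j : ℕ) : ∀ A : Finset V, m ≤ ε ^ j * #A →
      ε ^ (Nat.choose (j + 1) 2) * (#A : ℝ) ^ (j + 1) ≤ #(cliqueTuples G (j + 1) A) := by
  induction j with
  | zero =>
    intro A _
    have := cliqueTuples_succ G 0 A
    have h0 : ∀ B : Finset V, #(cliqueTuples G 0 B) = 1 := by
      intro B; simp [cliqueTuples]
    simp only [h0, sum_const, smul_eq_mul, mul_one] at this
    simpa using this
  | succ j ih =>
    intro A hA
    set a : ℝ := (#A : ℝ) with ha
    have ha0 : 0 ≤ a := by positivity
    let d : V → ℝ := fun v => #{x ∈ A | G.Adj v x}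
    have hmA : m ≤ a := hA.trans (mul_le_of_le_one_left ha0 (pow_le_one₀ hε.le hε1))
    have hdeg : 2 * (ε * a ^ 2) ≤ ∑ v ∈ A, d v := by
      have h1 := hS A hmA
      have h2 : ∑ v ∈ A, d v = 2 * (inducedEdgeCount G A : ℝ) := by
        have := sum_degree_eq G A
        simp only [d]
        exact_mod_cast this
      rw [h2]; linarith
    have hbig : ε * a ^ 2 ≤ ∑ v ∈ A with ε * a ≤ d v, d v := by
      have h1 := Finset.sum_filter_add_sum_filter_not A (fun v => ε * a ≤ d v) d
      have h2 : ∑ v ∈ A with ¬ ε * a ≤ d v, d v ≤ a * (ε * a) := by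
        calc ∑ v ∈ A with ¬ ε * a ≤ d v, d v
            ≤ ∑ v ∈ A with ¬ ε * a ≤ d v, ε * a := by
              refine Finset.sum_le_sum fun v hv => ?_
              simp only [mem_filter, not_le] at hv
              exact hv.2.le
          _ = #{v ∈ A | ¬ ε * a ≤ d v} * (ε * a) := by rw [sum_const, nsmul_eq_mul]
          _ ≤ a * (ε * a) := by
              refine mul_le_mul_of_nonneg_right ?_ (by positivity)
              rw [ha]
              exact_mod_cast Finset.card_filter_le _ _
      nlinarith
    have hsucc : ∑ v ∈ A, (#(cliqueTuples G (j + 1) {x ∈ A | G.Adj v x}) : ℝ) ≤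
        #(cliqueTuples G (j + 1 + 1) A) := by
      exact_mod_cast cliqueTuples_succ G (j + 1) A
    refine le_trans ?_ hsucc
    calc ε ^ (Nat.choose (j + 1 + 1) 2) * a ^ (j + 1 + 1)
        = ε ^ (Nat.choose (j + 1) 2) * ((ε * a) ^ j * (ε * a ^ 2)) := by
          rw [Nat.choose_succ_succ' (j + 1) 1, Nat.choose_one_right]
          ring
      _ ≤ ε ^ (Nat.choose (j + 1) 2) * ((ε * a) ^ j * ∑ v ∈ A with ε * a ≤ d v, d v) := by
          gcongr
      _ = ∑ v ∈ A with ε * a ≤ d v, ε ^ (Nat.choose (j + 1) 2) * ((ε * a) ^ j * d v) := by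
          rw [Finset.mul_sum, Finset.mul_sum]
      _ ≤ ∑ v ∈ A with ε * a ≤ d v, (#(cliqueTuples G (j + 1) {x ∈ A | G.Adj v x}) : ℝ) := by
          refine Finset.sum_le_sum fun v hv => ?_
          have hv' : ε * a ≤ d v := (mem_filter.1 hv).2
          have hd0 : 0 ≤ d v := by simp only [d]; positivity
          refine le_trans ?_ (ih {x ∈ A | G.Adj v x} ?_)
          · change _ ≤ _ * (d v) ^ (j + 1)
            rw [pow_succ]
            gcongr
          · change m ≤ ε ^ j * d v
            refine hA.trans ?_
            rw [pow_succ, mul_assoc]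
            gcongr
      _ ≤ _ := Finset.sum_le_sum_of_subset_of_nonneg (Finset.filter_subset _ _)
          (fun _ _ _ => by positivity)

open Finset in
lemma cliqueTuples_le_indCount_top {α V : Type} [Fintype α] [Fintype V] (G : SimpleGraph V)
    (h : ℕ) (hcard : h = Fintype.card α) :
    #(cliqueTuples G h univ) ≤ indCount (⊤ : SimpleGraph α) G := by
  classical
  have e : α ≃ Fin h := Fintype.equivFinOfCardEq hcard.symm
  unfold indCount
  rw [Nat.card_eq_fintype_card, Fintype.card_subtype]
  refine Finset.card_le_card_of_injOn (fun f => f ∘ e) ?_ ?_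
  · intro f hf
    simp only [cliqueTuples, mem_coe, mem_filter, mem_univ, true_and, implies_true] at hf ⊢
    have hadj : ∀ a b, a ≠ b → G.Adj (f (e a)) (f (e b)) := by
      intro a b hab
      rcases lt_or_gt_of_ne (fun h' => hab (e.injective h') : e a ≠ e b) with h1 | h1
      · exact hf _ _ h1
      · exact (hf _ _ h1).symm
    refine ⟨fun a b hab => ?_, fun a b => ?_⟩
    · by_contra hne
      have := hadj a b hne
      simp only [Function.comp_apply] at hab
      rw [hab] at this
      exact G.loopless.irrefl _ this
    · rw [SimpleGraph.top_adj]
      refine ⟨fun h1 h2 => ?_, hadj a b⟩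
      subst h2
      exact G.loopless.irrefl _ h1
  · intro f _ g _ hfg
    funext i
    have := congrFun hfg (e.symm i)
    simpa using this

/-! ### The lower bound on induced copies -/

open Finset Classical in
/-- Iterating `swap_lower` from the complete graph down to `P`. -/
lemma ind_lower {α V : Type} [Fintype α] [Fintype V] [Nonempty V]
    (G : SimpleGraph V) (ε w c : ℝ) (hε : 0 < ε) (hε1 : ε < 1 / 4) (hw : 0 ≤ w)
    (hW : ∀ W₁ W₂ : Finset V, Disjoint W₁ W₂ → w ≤ #W₁ → w ≤ #W₂ →
      ε * #W₁ * #W₂ ≤ (nonedgeCount G W₁ W₂ : ℝ))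
    (hc : c ≤ indCount (⊤ : SimpleGraph α) G) (k : ℕ) :
    ∀ P : SimpleGraph α, #Pᶜ.edgeFinset = k →
      ε ^ k * c - 2 * w * (Fintype.card V : ℝ) ^ (Fintype.card α - 1) ≤ indCount P G := by
  have he : 0 ≤ w * (Fintype.card V : ℝ) ^ (Fintype.card α - 1) := by positivity
  induction k with
  | zero =>
    intro P hP
    have : P = ⊤ := by
      rw [Finset.card_eq_zero, SimpleGraph.edgeFinset_eq_empty] at hP
      exact compl_eq_bot.1 hP
    subst this
    rw [pow_zero, one_mul]
    linarith
  | succ k ih =>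
    intro P hP
    have hne : Pᶜ.edgeFinset.Nonempty := by
      rw [← Finset.card_pos]; omega
    obtain ⟨e, he'⟩ := hne
    induction e using Sym2.ind with
    | _ u v =>
    have huvc : Pᶜ.Adj u v := by simpa using he'
    have huv : u ≠ v := huvc.ne
    have hnP : ¬ P.Adj u v := ((SimpleGraph.compl_adj _ _ _).1 huvc).2
    have hcompl : (P ⊔ SimpleGraph.edge u v)ᶜ.edgeFinset = Pᶜ.edgeFinset.erase s(u, v) := by
      ext e
      induction e using Sym2.ind with
      | _ a b =>
      simp only [SimpleGraph.mem_edgeFinset, SimpleGraph.mem_edgeSet, SimpleGraph.compl_adj,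
        SimpleGraph.sup_adj, SimpleGraph.edge_adj, Finset.mem_erase, ne_eq, Sym2.eq_iff]
      tauto
    have h1 := ih (P ⊔ SimpleGraph.edge u v) (by
      have h0 := congrArg Finset.card hcompl
      rw [Finset.card_erase_of_mem he', hP, Nat.add_sub_cancel] at h0
      convert h0)
    have h2 := swap_lower G ε w hε hw hW P (P ⊔ SimpleGraph.edge u v) u v huv
      (by simp [SimpleGraph.edge_adj, huv]) hnP (by
        intro a b hab hba
        simp only [SimpleGraph.sup_adj, SimpleGraph.edge_adj]
        tauto)
    refine le_trans ?_ h2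
    have h3 := mul_le_mul_of_nonneg_left h1 hε.le
    rw [pow_succ]
    nlinarith

theorem stmt11 (α : Type) [Fintype α] (H : SimpleGraph α) (h : ℕ) (hcard : h = Fintype.card α)
    (hh : 1 ≤ h) (ε : ℝ) (hε0 : 0 < ε) (hε1 : ε < 1 / 4)
    (V : Type) [Fintype V] (G : SimpleGraph V)
    (hind : (indCount H G : ℝ) < (ε ^ h * (Fintype.card V : ℝ)) ^ h) :
    (∃ S : Finset V, ε ^ (h * (h - 1) / 2) * (Fintype.card V : ℝ) ≤ S.card ∧
      (inducedEdgeCount G S : ℝ) < ε * (S.card : ℝ) ^ 2) ∨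
    (∃ W₁ W₂ : Finset V, Disjoint W₁ W₂ ∧
      2 * (ε / 2) ^ (h ^ 2) * (Fintype.card V : ℝ) ≤ W₁.card ∧
      2 * (ε / 2) ^ (h ^ 2) * (Fintype.card V : ℝ) ≤ W₂.card ∧
      (nonedgeCount G W₁ W₂ : ℝ) < ε * W₁.card * W₂.card) := by
  classical
  by_contra hcon
  push Not at hcon
  obtain ⟨hS, hW⟩ := hcon
  have hne : Nonempty V := by
    by_contra hempty
    rw [not_nonempty_iff] at hempty
    have h0 : (Fintype.card V : ℝ) = 0 := by simp
    rw [h0, mul_zero, zero_pow (by omega)] at hind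
    exact absurd hind (not_lt.2 (by positivity))
  obtain ⟨k, rfl⟩ : ∃ k, h = k + 1 := ⟨h - 1, by omega⟩
  set n : ℝ := (Fintype.card V : ℝ) with hn
  have hn0 : 0 < n := by rw [hn]; exact_mod_cast Fintype.card_pos
  rw [← Nat.choose_two_right] at hS
  set q := Nat.choose (k + 1) 2 with hq
  have hkq : k ≤ q := by
    rw [hq, Nat.choose_succ_succ' k 1, Nat.choose_one_right]; omega
  have hq2 : q + q = (k + 1) * k := by
    have h1 := Nat.triangle_succ k
    have h2 : (k + 1) * k = 2 * q := by
      rw [hq, Nat.choose_two_right, Nat.add_sub_cancel]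
      exact (Nat.mul_div_cancel' (by
        rw [mul_comm]; exact (Nat.even_mul_succ_self k).two_dvd)).symm
    omega
  have hclique : ε ^ q * n ^ (k + 1) ≤ indCount (⊤ : SimpleGraph α) G := by
    have h1 := clique_lower G ε (ε ^ q * n) hε0 (by linarith) hS k Finset.univ (by
      rw [Finset.card_univ, ← hn]
      exact mul_le_mul_of_nonneg_right
        (pow_le_pow_of_le_one hε0.le (by linarith) hkq) hn0.le)
    rw [Finset.card_univ, ← hn, ← hq] at h1
    refine h1.trans ?_
    exact_mod_cast cliqueTuples_le_indCount_top G (k + 1) hcard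
  set w : ℝ := 2 * (ε / 2) ^ ((k + 1) ^ 2) * n with hw
  have hw0 : 0 ≤ w := by positivity
  have hlow := ind_lower G ε w _ hε0 hε1 hw0 hW hclique _ H rfl
  rw [← hcard, Nat.add_sub_cancel, ← hn] at hlow
  have hedges : Hᶜ.edgeFinset.card ≤ q := by
    have := SimpleGraph.card_edgeFinset_le_card_choose_two (G := Hᶜ)
    rw [← hcard] at this
    exact this
  have hwle : w ≤ ε ^ ((k + 1) ^ 2) * n := by
    have h2 : (2 : ℝ) ≤ 2 ^ ((k + 1) ^ 2) := by
      calc (2 : ℝ) = 2 ^ 1 := by norm_num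
        _ ≤ 2 ^ ((k + 1) ^ 2) := pow_le_pow_right₀ (by norm_num) (Nat.one_le_pow _ _ (by omega))
    rw [hw, div_pow]
    refine mul_le_mul_of_nonneg_right ?_ hn0.le
    rw [mul_div_assoc', div_le_iff₀ (by positivity), mul_comm]
    exact mul_le_mul_of_nonneg_left h2 (by positivity)
  have hmain : ε ^ (q + q) * n ^ (k + 1) - 2 * (ε ^ ((k + 1) ^ 2) * n ^ (k + 1)) ≤
      indCount H G := by
    refine le_trans (sub_le_sub ?_ ?_) hlow
    · rw [pow_add, mul_assoc]
      exact mul_le_mul_of_nonneg_right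
        (pow_le_pow_of_le_one hε0.le (by linarith) hedges) (by positivity)
    · have := mul_le_mul_of_nonneg_right hwle (show 0 ≤ n ^ k by positivity)
      rw [pow_succ n k]
      nlinarith
  have hεk : ε ^ (k + 1) ≤ 1 / 4 := by
    calc ε ^ (k + 1) ≤ ε ^ 1 := pow_le_pow_of_le_one hε0.le (by linarith) (by omega)
      _ ≤ 1 / 4 := by rw [pow_one]; exact hε1.le
  have hsq : ε ^ ((k + 1) ^ 2) = ε ^ (q + q) * ε ^ (k + 1) := by
    rw [← pow_add, hq2]; congr 1; ring
  have hE : (ε ^ (k + 1) * n) ^ (k + 1) = ε ^ ((k + 1) ^ 2) * n ^ (k + 1) := by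
    rw [mul_pow, ← pow_mul, sq]
  rw [hE] at hind
  rw [hsq] at hind hmain
  have hpos : 0 < ε ^ (q + q) * n ^ (k + 1) := by positivity
  nlinarith
end

section
/- Let F be a forest and let d > 0 be an F-good integer. Let G be a graph with a blockade 𝓑 of length at least 3d² that is equicardinal and symmetrically 1/d²-sparse, and let w be the width of 𝓑. If there is no 𝓑-rainbow induced subgraph of G isomorphic to F, then there is an anticomplete pair A, B ⊆ V(G) with |A|, |B| ≥ w. -/
/-!
Keep `3d²` of the blocks, each of size `w`, and let `H` be the graph on their union obtained from
`G` by deleting all edges inside blocks. By sparsity, every vertex has degree at most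
`(3d² - 1) w / d² < 3w` in `H`. Merging the blocks in groups of `3d` gives a blockade of length `d`
and width `W = 3dw` in `H`, and `3w = W / d`. A rainbow copy of `F` in `H` for the merged blockade
is a rainbow copy in `G` for the original one, so goodness of `d` produces an anticomplete pair
`A, C` of `H` with `|A|, |C| ≥ 3w`.

The sets `A, C` need not be anticomplete in `G`, since edges inside blocks were deleted. This is
repaired by splitting the blocks into two classes (`exists_split`), and keeping only the part of
`A` in the first class and the part of `C` in the second. Adding blocks to a class one at a time,
stop as soon as it contains `w` vertices of one of `A, C`, say `A`; it then contains fewer than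
`2w` vertices of `C`, because a block has at most `w` vertices, so at least `w` vertices of `C`
remain outside.
-/

open SimpleGraph

/-- `B` is `x`-sparse to `A`: every vertex in `B` has at most `x|A|` neighbours in `A`. -/
def SparseTo {V : Type} (G : SimpleGraph V) [DecidableRel G.Adj] (x : ℝ) (A B : Finset V) :
    Prop :=
  ∀ v ∈ B, ((A.filter (fun a => G.Adj v a)).card : ℝ) ≤ x * A.card

/-- A blockade: a sequence of pairwise disjoint sets of vertices. -/
def IsBlockade {V : Type} {k : ℕ} (B : Fin k → Finset V) : Prop :=
  ∀ i j, i ≠ j → Disjoint (B i) (B j)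

def Equicardinal {V : Type} {k : ℕ} (B : Fin k → Finset V) : Prop :=
  ∀ i j, (B i).card = (B j).card

/-- The blockade `B` is symmetrically `x`-sparse: `B i` is `x`-sparse to `B j` for all
distinct `i, j`. -/
def SymSparse {V : Type} (G : SimpleGraph V) [DecidableRel G.Adj] (x : ℝ) {k : ℕ}
    (B : Fin k → Finset V) : Prop :=
  ∀ i j, i ≠ j → SparseTo G x (B j) (B i)

/-- `A` and `C` are anticomplete: there are no edges between them. -/
def AnticompleteSets {V : Type} (G : SimpleGraph V) (A C : Finset V) : Prop :=
  ∀ a ∈ A, ∀ b ∈ C, ¬ G.Adj a b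

/-- An anticomplete blockade: every two blocks are anticomplete. -/
def AnticompleteBlockade {V : Type} (G : SimpleGraph V) {k : ℕ} (B : Fin k → Finset V) : Prop :=
  IsBlockade B ∧ ∀ i j, i ≠ j → AnticompleteSets G (B i) (B j)

/-- `f` is a `B`-rainbow induced copy of `F` in `G`: an induced copy of `F` whose image is
contained in `V(𝓑)` and meets each block in at most one vertex. -/
def IsRainbowCopy {α V : Type} (G : SimpleGraph V) {k : ℕ} (B : Fin k → Finset V)
    (F : SimpleGraph α) (f : α → V) : Prop :=
  IsInducedCopy F G f ∧ (∀ u, ∃ i, f u ∈ B i) ∧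
    ∀ (i : Fin k) (u v : α), f u ∈ B i → f v ∈ B i → u = v

/-- `d` is `F`-good: whenever `G` is a graph with a blockade of length at least `d` and width at
least `w` such that every vertex of `G` has degree less than `w/d`, and there is no anticomplete
pair of vertex sets each of size at least `w/d`, there is a `𝓑`-rainbow induced copy of `F`. -/
def FGood {α : Type} (F : SimpleGraph α) (d : ℕ) : Prop :=
  0 < d ∧
  ∀ (V : Type) [Fintype V] (G : SimpleGraph V) [DecidableRel G.Adj]
    (k : ℕ) (B : Fin k → Finset V) (w : ℕ),
    IsBlockade B → d ≤ k → (∀ i, w ≤ (B i).card) →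
    (∀ v : V, (G.degree v : ℝ) < (w : ℝ) / d) →
    (¬ ∃ A C : Finset V, Disjoint A C ∧ AnticompleteSets G A C ∧
        (w : ℝ) / d ≤ A.card ∧ (w : ℝ) / d ≤ C.card) →
    ∃ f : α → V, IsRainbowCopy G B F f

/-- Two weight functions bounded by `w` and of total weight at least `3w` can be separated: some
index set carries weight at least `w` of the first, and its complement at least `w` of the second. -/
lemma exists_split {K : Type*} [Fintype K] [DecidableEq K] (a c : K → ℕ) (w : ℕ) (hw : 0 < w)
    (ha : ∀ i, a i ≤ w) (hc : ∀ i, c i ≤ w) (hA : 3 * w ≤ ∑ i, a i) (hC : 3 * w ≤ ∑ i, c i) :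
    ∃ I : Finset K, w ≤ ∑ i ∈ I, a i ∧ w ≤ ∑ i ∈ Iᶜ, c i := by
  -- A set at which one of the two weights has just reached `w`.
  have key : ∀ S : Finset K, (∑ i ∈ S, a i < w ∧ ∑ i ∈ S, c i < w) ∨
      ∃ I : Finset K, (w ≤ ∑ i ∈ I, a i ∧ ∑ i ∈ I, c i < 2 * w) ∨
        (w ≤ ∑ i ∈ I, c i ∧ ∑ i ∈ I, a i < 2 * w) := by
    intro S
    induction S using Finset.induction_on with
    | empty => left; simpa using hw
    | insert x S hx ih =>
      rcases ih with ⟨h1, h2⟩ | h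
      · by_cases h : ∑ i ∈ insert x S, a i < w ∧ ∑ i ∈ insert x S, c i < w
        · exact Or.inl h
        · refine Or.inr ⟨insert x S, ?_⟩
          rw [Finset.sum_insert hx, Finset.sum_insert hx] at *
          have := ha x
          have := hc x
          omega
      · exact Or.inr h
  rcases key Finset.univ with h | ⟨I, h | h⟩
  · omega
  · have := Finset.sum_add_sum_compl I c
    exact ⟨I, h.1, by omega⟩
  · have := Finset.sum_add_sum_compl I a
    exact ⟨Iᶜ, by omega, by rw [compl_compl]; exact h.1⟩

/-- The pull-back of `G` along `e : K × Fin w → V`, without the edges inside a fibre of the first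
projection: block `κ` of the new graph is `{κ} × Fin w`. -/
def crossGraph {V K : Type} {w : ℕ} (G : SimpleGraph V) (e : K × Fin w → V) :
    SimpleGraph (K × Fin w) where
  Adj x y := x.1 ≠ y.1 ∧ G.Adj (e x) (e y)
  symm := ⟨fun _ _ h => ⟨h.1.symm, h.2.symm⟩⟩
  loopless := ⟨fun _ h => h.1 rfl⟩

open Classical in
lemma card_fibre_le {K : Type} {w : ℕ} (A : Finset (K × Fin w)) (κ : K) :
    (A.filter (fun x => x.1 = κ)).card ≤ w := by
  have h := Finset.card_le_card_of_injOn (s := A.filter (fun x => x.1 = κ))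
    (t := (Finset.univ : Finset (Fin w))) Prod.snd (by intro x _; simp) (by
      intro x hx y hy h
      simp only [Finset.coe_filter, Set.mem_ofPred_eq] at hx hy
      exact Prod.ext (hx.2.trans hy.2.symm) h)
  simpa using h

open Classical in
lemma sum_card_fibre {K : Type} {w : ℕ} (A : Finset (K × Fin w)) (I : Finset K) :
    ∑ κ ∈ I, (A.filter (fun x => x.1 = κ)).card = (A.filter (fun x => x.1 ∈ I)).card := by
  rw [Finset.card_eq_sum_card_fiberwise (f := Prod.fst) (t := I) (by intro x hx; simp_all)]
  refine Finset.sum_congr rfl fun κ hκ => congrArg _ ?_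
  ext x
  simp only [Finset.mem_filter]
  constructor
  · rintro ⟨h1, rfl⟩; exact ⟨⟨h1, hκ⟩, rfl⟩
  · rintro ⟨⟨h1, _⟩, h2⟩; exact ⟨h1, h2⟩

open Classical in
/-- A large anticomplete pair of `crossGraph G e` contains one of `G`, of a third of the size:
separate the blocks used by the two sets, so that the deleted edges no longer matter. -/
lemma anticomplete_of_cross {V K : Type} [Fintype K] {w : ℕ} (hw : 0 < w)
    (G : SimpleGraph V) (e : K × Fin w → V) (he : Function.Injective e)
    (A C : Finset (K × Fin w)) (hAC : AnticompleteSets (crossGraph G e) A C)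
    (hA : 3 * w ≤ A.card) (hC : 3 * w ≤ C.card) :
    ∃ A C : Finset V, Disjoint A C ∧ AnticompleteSets G A C ∧ w ≤ A.card ∧ w ≤ C.card := by
  have hsplit : ∃ I : Finset K, w ≤ ∑ κ ∈ I, (A.filter (fun x => x.1 = κ)).card ∧
      w ≤ ∑ κ ∈ Iᶜ, (C.filter (fun x => x.1 = κ)).card :=
    exists_split _ _ w hw (card_fibre_le A) (card_fibre_le C)
      (by rw [sum_card_fibre]; simpa using hA) (by rw [sum_card_fibre]; simpa using hC)
  obtain ⟨I, h1, h2⟩ := hsplit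
  rw [sum_card_fibre] at h1 h2
  refine ⟨(A.filter (fun x => x.1 ∈ I)).image e, (C.filter (fun x => x.1 ∈ Iᶜ)).image e,
    ?_, ?_, ?_, ?_⟩
  · rw [Finset.disjoint_image he, Finset.disjoint_left]
    intro x hx hy
    simp only [Finset.mem_filter, Finset.mem_compl] at hx hy
    exact hy.2 hx.2
  · intro u hu v hv huv
    simp only [Finset.mem_image, Finset.mem_filter, Finset.mem_compl] at hu hv
    obtain ⟨x, ⟨hxA, hxI⟩, rfl⟩ := hu
    obtain ⟨y, ⟨hyC, hyI⟩, rfl⟩ := hv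
    exact hAC x hxA y hyC ⟨fun h => hyI (h ▸ hxI), huv⟩
  · rwa [Finset.card_image_of_injective _ he]
  · rwa [Finset.card_image_of_injective _ he]

open Classical in
/-- If a vertex has at most `s` neighbours in every block, its degree in the cross graph is at most
`(|K| - 1) s`, as its own block contributes nothing. -/
lemma degree_cross_le {V K : Type} [Fintype K] {w : ℕ} (G : SimpleGraph V) (e : K × Fin w → V)
    (s : ℝ) (x : K × Fin w)
    (hs : ∀ κ, κ ≠ x.1 →
      ((Finset.univ.filter (fun t : Fin w => G.Adj (e x) (e (κ, t)))).card : ℝ) ≤ s) :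
    ((crossGraph G e).degree x : ℝ) ≤ ((Fintype.card K : ℝ) - 1) * s := by
  have h0 : (crossGraph G e).neighborFinset x ⊆ (Finset.univ.erase x.1).biUnion (fun κ =>
      (Finset.univ.filter (fun t : Fin w => G.Adj (e x) (e (κ, t)))).image (fun t => (κ, t))) := by
    intro y hy
    rw [mem_neighborFinset] at hy
    simp only [Finset.mem_biUnion, Finset.mem_erase, Finset.mem_image, Finset.mem_filter,
      Finset.mem_univ, true_and, and_true]
    exact ⟨y.1, hy.1.symm, y.2, hy.2, rfl⟩
  have h1 : (crossGraph G e).degree x ≤ ∑ κ ∈ Finset.univ.erase x.1,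
      (Finset.univ.filter (fun t : Fin w => G.Adj (e x) (e (κ, t)))).card := by
    rw [← card_neighborFinset_eq_degree]
    exact (Finset.card_le_card h0).trans (Finset.card_biUnion_le.trans
      (Finset.sum_le_sum fun κ _ => Finset.card_image_le))
  calc ((crossGraph G e).degree x : ℝ) ≤ ∑ κ ∈ Finset.univ.erase x.1,
        ((Finset.univ.filter (fun t : Fin w => G.Adj (e x) (e (κ, t)))).card : ℝ) := by
        exact_mod_cast h1
    _ ≤ ∑ κ ∈ Finset.univ.erase x.1, s :=
        Finset.sum_le_sum fun κ hκ => hs κ (Finset.ne_of_mem_erase hκ)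
    _ = ((Fintype.card K : ℝ) - 1) * s := by
        rw [Finset.sum_const, Finset.card_erase_of_mem (Finset.mem_univ _), Finset.card_univ,
          nsmul_eq_mul, Nat.cast_sub (Fintype.card_pos_iff.mpr ⟨x.1⟩), Nat.cast_one]

theorem stmt16 (α : Type) [Fintype α] (F : SimpleGraph α) (hF : F.IsAcyclic)
    (d : ℕ) (hd : FGood F d)
    (V : Type) [Fintype V] (G : SimpleGraph V) [DecidableRel G.Adj]
    (k : ℕ) (B : Fin k → Finset V) (w : ℕ)
    (hblock : IsBlockade B) (hk : 3 * d ^ 2 ≤ k)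
    (hw : ∀ i, (B i).card = w)
    (hsparse : SymSparse G (1 / (d : ℝ) ^ 2) B)
    (hnorainbow : ¬ ∃ f : α → V, IsRainbowCopy G B F f) :
    ∃ A C : Finset V, Disjoint A C ∧ AnticompleteSets G A C ∧ w ≤ A.card ∧ w ≤ C.card := by
  classical
  rcases Nat.eq_zero_or_pos w with rfl | hw0
  · exact ⟨∅, ∅, by simp, by simp [AnticompleteSets], by simp, by simp⟩
  obtain ⟨hd0, hgood⟩ := hd
  have hle : d * (3 * d) ≤ k := by nlinarith
  -- Block `(i, j)` is the `j`-th block of the `i`-th group.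
  obtain ⟨idx, hidx⟩ : ∃ idx : Fin d × Fin (3 * d) → Fin k, Function.Injective idx :=
    ⟨fun p => Fin.castLE hle (finProdFinEquiv p),
      (Fin.castLE_injective hle).comp finProdFinEquiv.injective⟩
  let e : (Fin d × Fin (3 * d)) × Fin w → V := fun x =>
    ((B (idx x.1)).equivFinOfCardEq (hw _)).symm x.2
  have he_mem : ∀ x, e x ∈ B (idx x.1) := fun x =>
    (((B (idx x.1)).equivFinOfCardEq (hw _)).symm x.2).2
  have hblk : ∀ x i, e x ∈ B i → i = idx x.1 := by
    intro x i h
    by_contra hne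
    exact Finset.disjoint_left.mp (hblock _ _ hne) h (he_mem x)
  have he : Function.Injective e := by
    rintro ⟨p, t⟩ ⟨q, u⟩ h
    have hpq : p = q := hidx (hblk (q, u) _ (h ▸ he_mem (p, t)))
    subst hpq
    have := ((B (idx p)).equivFinOfCardEq (hw _)).symm.injective (Subtype.ext h)
    exact Prod.ext rfl this
  by_contra hcon
  have hdR : (0 : ℝ) < d := by exact_mod_cast hd0
  have hwR : (0 : ℝ) < w := by exact_mod_cast hw0
  have hW : ((3 * d * w : ℕ) : ℝ) / d = ((3 * w : ℕ) : ℝ) := by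
    push_cast
    field_simp
  obtain ⟨f, ⟨hfinj, hfadj⟩, -, hfr⟩ := hgood ((Fin d × Fin (3 * d)) × Fin w) (crossGraph G e) d
    (fun i => Finset.univ.filter (fun x => x.1.1 = i)) (3 * d * w)
    (by
      intro i j hij
      rw [Finset.disjoint_left]
      intro x hx hy
      simp only [Finset.mem_filter, Finset.mem_univ, true_and] at hx hy
      exact hij (hx.symm.trans hy))
    le_rfl
    (by
      intro i
      have h := Finset.card_le_card_of_injOn
        (s := (Finset.univ : Finset (Fin (3 * d) × Fin w)))
        (t := Finset.univ.filter (fun x : (Fin d × Fin (3 * d)) × Fin w => x.1.1 = i))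
        (fun p => ((i, p.1), p.2)) (by intro p _; simp)
        (by
          intro p _ q _ h
          simp only [Prod.mk.injEq, true_and] at h
          exact Prod.ext h.1 h.2)
      simpa using h)
    (by
      intro x
      have h := degree_cross_le G e (1 / (d : ℝ) ^ 2 * w) x (by
        intro κ hκ
        have h1 := hsparse (idx x.1) (idx κ) (fun h => hκ (hidx h).symm) (e x) (he_mem x)
        rw [hw] at h1
        refine le_trans ?_ h1
        norm_cast
        refine Finset.card_le_card_of_injOn (fun t => e (κ, t)) ?_ ?_
        · intro t ht
          simp only [Finset.coe_filter, Finset.mem_univ, true_and, Set.mem_ofPred_eq] at ht ⊢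
          exact ⟨he_mem (κ, t), ht⟩
        · intro t _ u _ h
          exact (Prod.ext_iff.mp (he h)).2)
      rw [hW]
      convert lt_of_le_of_lt h ?_
      simp only [Fintype.card_prod, Fintype.card_fin]
      push_cast
      have h2 : ((d : ℝ) * (3 * d) - 1) * (1 / (d : ℝ) ^ 2 * w) = 3 * w - w / (d : ℝ) ^ 2 := by
        field_simp
      rw [h2]
      have : 0 < (w : ℝ) / (d : ℝ) ^ 2 := by positivity
      linarith)
    (by
      rintro ⟨A, C, -, hAC, hA, hC⟩
      rw [hW] at hA hC
      exact hcon (anticomplete_of_cross hw0 G e he A C hAC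
        (by exact_mod_cast hA) (by exact_mod_cast hC)))
  have hgrp : ∀ u v, (f u).1.1 = (f v).1.1 → u = v := fun u v h =>
    hfr (f u).1.1 u v (by simp) (by simp [h])
  refine hnorainbow ⟨e ∘ f, ⟨he.comp hfinj, ?_⟩, fun u => ⟨_, he_mem (f u)⟩, ?_⟩
  · intro u v
    rw [← hfadj]
    constructor
    · intro h
      refine ⟨fun h1 => ?_, h⟩
      have huv := hgrp u v (congrArg Prod.fst h1)
      subst huv
      exact G.loopless.irrefl _ h
    · exact fun h => h.2
  · intro i u v hu hv
    have h1 := hidx ((hblk (f u) i hu).symm.trans (hblk (f v) i hv))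
    exact hgrp u v (congrArg Prod.fst h1)
end

section
/- Let F be a forest and let d > 0 be an F-good integer. Then for every integer s ≥ 1 and every graph G the following holds. Let D = 2(2d²)^s, and let 𝓑 be a blockade in G of length D that is equicardinal and symmetrically 2/(2d²)^s-sparse, such that there is no 𝓑-rainbow induced subgraph of G isomorphic to F. Then G admits an anticomplete (2^s, w/(2d²)^{s−1})-blockade, where w is the width of 𝓑. -/
/-!
Write `Q = 2d²`. Group the `2Q^s` blocks of `𝓑` into `d` superblocks, and delete from `G` all edges
inside single blocks. Sparsity bounds the degrees, and a rainbow copy of `F` for the superblocks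
would also be one for `𝓑` in `G`, since it has at most one vertex in each block. As `d` is `F`-good,
there are therefore two disjoint sets `A`, `C`, each of size at least `4Q^(s-1)w`, such that
`A ∩ B_i` and `C ∩ B_j` are anticomplete for all `i ≠ j` (`exists_split`).

The proof is by induction on `s`. For `s = 1`, a balancing argument (`exists_balanced`) yields a set
`S` of indices such that the part of `A` in the blocks of `S` and the part of `C` in the other
blocks have size at least `w`; these two parts are anticomplete. For larger `s`, let `I` (resp. `J`)
be the set of indices of blocks in which `A` (resp. `C`) has density at least `1/Q`. With
`N = 2Q^(s-1)`, counting gives `|I|, |J| ≥ N` and `|I ∪ J| ≥ 2N`, so there are disjoint `I' ⊆ I` and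
`J' ⊆ J` of size `N`. Shrinking the sets `A ∩ B_i` (`i ∈ I'`) and `C ∩ B_j` (`j ∈ J'`) to size
`⌈w/Q⌉` gives two blockades, anticomplete to each other, to which the inductive hypothesis
applies. The sparsity constant is weakened by exactly the factor `Q` lost in the width.
-/

open SimpleGraph

/-! ### Large anticomplete pairs from `F`-goodness -/

/-- A rainbow copy for a blockade whose blocks lie in distinct blocks of `B` is rainbow for `B`. -/
lemma rainbow_of_sub {α V : Type} {F : SimpleGraph α} {G : SimpleGraph V} {n m : ℕ}
    {B : Fin n → Finset V} {B' : Fin m → Finset V} (hB : IsBlockade B) (φ : Fin m → Fin n)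
    (hφ : Function.Injective φ) (hsub : ∀ i, B' i ⊆ B (φ i)) {f : α → V}
    (hf : IsRainbowCopy G B' F f) : IsRainbowCopy G B F f := by
  obtain ⟨h1, h2, h3⟩ := hf
  have uniq : ∀ {v i j}, v ∈ B i → v ∈ B j → i = j := by
    intro v i j hi hj
    by_contra h
    exact Finset.disjoint_left.1 (hB i j h) hi hj
  refine ⟨h1, fun u => ?_, fun i u v hu hv => ?_⟩
  · obtain ⟨i, hi⟩ := h2 u
    exact ⟨φ i, hsub i hi⟩
  · obtain ⟨a, ha⟩ := h2 u
    obtain ⟨b, hb⟩ := h2 v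
    have hab : a = b := hφ ((uniq (hsub a ha) hu).trans (uniq (hsub b hb) hv).symm)
    exact h3 a u v ha (hab ▸ hb)

/-- The main use of `F`-goodness: a sparse blockade with no rainbow copy of `F` contains two large
disjoint families that are anticomplete across distinct blocks. -/
lemma exists_split_s17 {α : Type} {F : SimpleGraph α} {d : ℕ} (hd : FGood F d)
    {V : Type} {G : SimpleGraph V} [DecidableRel G.Adj] [Fintype V]
    {n p q w : ℕ} (hn : n = d * (d * p)) (hq : n = 2 * q) (hp : 4 ≤ p) (hw0 : 0 < w)
    (B : Fin n → Finset V) (hB : IsBlockade B) (hw : ∀ i, (B i).card = w)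
    (hsp : ∀ i j, i ≠ j → ∀ v ∈ B i, q * ((B j).filter (fun a => G.Adj v a)).card ≤ 2 * w)
    (hno : ¬ ∃ f : α → V, IsRainbowCopy G B F f) :
    ∃ A C : Fin n → Finset V, (∀ i, A i ⊆ B i) ∧ (∀ i, C i ⊆ B i) ∧
      (∀ i, Disjoint (A i) (C i)) ∧ (∀ i j, i ≠ j → AnticompleteSets G (A i) (C j)) ∧
      p * w ≤ ∑ i, (A i).card ∧ p * w ≤ ∑ i, (C i).card := by
  classical
  obtain ⟨hd0, hgood⟩ := hd
  have uniq : ∀ {v i j}, v ∈ B i → v ∈ B j → i = j := by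
    intro v i j hi hj
    by_contra h
    exact Finset.disjoint_left.1 (hB i j h) hi hj
  let V' := {v : V // ∃ i, v ∈ B i}
  -- edges inside a single block are deleted
  let G' : SimpleGraph V' :=
    { Adj := fun u v => G.Adj u v ∧ ∀ i, ¬ ((u : V) ∈ B i ∧ (v : V) ∈ B i)
      symm := ⟨fun u v h => ⟨h.1.symm, fun i hi => h.2 i hi.symm⟩⟩
      loopless := ⟨fun u h => G.loopless.irrefl _ h.1⟩ }
  let e : Fin d × Fin (d * p) ≃ Fin n := finProdFinEquiv.trans (finCongr hn.symm)
  let B0 : Fin n → Finset V' := fun i => Finset.univ.filter (fun v => (v : V) ∈ B i)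
  have hB0card : ∀ i, (B0 i).card = w := by
    intro i
    rw [← hw i]
    refine Finset.card_bij (fun v _ => (v : V)) ?_ ?_ ?_
    · intro v hv; simpa [B0] using hv
    · intro a _ b _ h; exact Subtype.ext h
    · intro b hb; exact ⟨⟨b, i, hb⟩, by simpa [B0] using hb, rfl⟩
  have hB0 : ∀ i j, i ≠ j → Disjoint (B0 i) (B0 j) := by
    intro i j hij
    rw [Finset.disjoint_left]
    intro v hi hj
    simp only [B0, Finset.mem_filter, Finset.mem_univ, true_and] at hi hj
    exact hij (uniq hi hj)
  let B' : Fin d → Finset V' := fun g => Finset.univ.biUnion (fun j => B0 (e (g, j)))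
  have hmem : ∀ g v, v ∈ B' g ↔ ∃ j, (v : V) ∈ B (e (g, j)) := by
    intro g v; simp [B', B0]
  have hB' : IsBlockade B' := by
    intro g h hgh
    rw [Finset.disjoint_left]
    intro v hg hh
    obtain ⟨j, hj⟩ := (hmem _ _).1 hg
    obtain ⟨k, hk⟩ := (hmem _ _).1 hh
    have := e.injective (uniq hj hk)
    exact hgh (Prod.ext_iff.1 this).1
  have hB'card : ∀ g, d * p * w ≤ (B' g).card := by
    intro g
    rw [Finset.card_biUnion]
    · simp [hB0card]
    · intro j _ k _ hjk
      exact hB0 _ _ (fun h => hjk (Prod.ext_iff.1 (e.injective h)).2)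
  have hdR : (d : ℝ) ≠ 0 := by positivity
  have hdiv : ((d * p * w : ℕ) : ℝ) / d = ((p * w : ℕ) : ℝ) := by
    push_cast; field_simp
  have hdeg : ∀ v : V', G'.degree v < p * w := by
    rintro ⟨v, i, hi⟩
    have h1 : G'.degree ⟨v, i, hi⟩ ≤
        ∑ j ∈ Finset.univ.erase i, ((B j).filter (fun a => G.Adj v a)).card := by
      rw [← SimpleGraph.card_neighborFinset_eq_degree]
      refine le_trans ?_ Finset.card_biUnion_le
      refine Finset.card_le_card_of_injOn (fun u => (u : V)) ?_ ?_
      · rintro ⟨u, j, hj⟩ hu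
        have hu' : G'.Adj ⟨v, i, hi⟩ ⟨u, j, hj⟩ := by simpa using hu
        simp only [Finset.coe_biUnion, Set.mem_iUnion]
        refine ⟨j, ?_, ?_⟩
        · simp only [Finset.coe_erase, Set.mem_sdiff, Finset.mem_coe, Finset.mem_univ,
            Set.mem_singleton_iff, true_and]
          rintro rfl
          exact hu'.2 j ⟨hi, hj⟩
        · simpa using ⟨hj, hu'.1⟩
      · intro a _ b _ h; exact Subtype.ext h
    have h2 : q * ∑ j ∈ Finset.univ.erase i, ((B j).filter (fun a => G.Adj v a)).card
        ≤ (n - 1) * (2 * w) := by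
      rw [Finset.mul_sum]
      refine (Finset.sum_le_card_nsmul _ _ (2 * w) ?_).trans ?_
      · intro j hj
        exact hsp i j (Finset.ne_of_mem_erase hj).symm v hi
      · simp [Finset.card_erase_of_mem]
    have hn0 : 0 < n := i.pos
    have h3 : (n - 1) * (2 * w) < n * (2 * w) :=
      Nat.mul_lt_mul_of_pos_right (by omega) (by omega)
    have h4 : q * G'.degree ⟨v, i, hi⟩ < q * (4 * w) := by
      calc _ ≤ _ := Nat.mul_le_mul_left q h1
        _ ≤ _ := h2
        _ < _ := h3
        _ = _ := by rw [hq]; ring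
    exact (Nat.lt_of_mul_lt_mul_left h4).trans_le (Nat.mul_le_mul_right w hp)
  have key : ∃ A C : Finset V', Disjoint A C ∧ AnticompleteSets G' A C ∧
      ((d * p * w : ℕ) : ℝ) / d ≤ A.card ∧ ((d * p * w : ℕ) : ℝ) / d ≤ C.card := by
    by_contra hcon
    obtain ⟨f, ⟨hinj, hadj⟩, hcov, hrb⟩ := hgood V' G' d B' (d * p * w) hB' le_rfl hB'card
      (fun v => by rw [hdiv]; exact_mod_cast hdeg v) hcon
    -- a copy that is rainbow for the superblocks never sees the deleted edges
    have hone : ∀ (i : Fin n) (u v : α), (f u : V) ∈ B i → (f v : V) ∈ B i → u = v := by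
      intro i u v hu hv
      refine hrb (e.symm i).1 u v ((hmem _ _).2 ⟨(e.symm i).2, ?_⟩)
        ((hmem _ _).2 ⟨(e.symm i).2, ?_⟩) <;> simpa
    refine hno ⟨fun u => (f u : V), ⟨fun u v h => hinj (Subtype.ext h), fun u v => ?_⟩,
      fun u => (f u).2, hone⟩
    rw [← hadj u v]
    refine ⟨fun h => ⟨h, fun i hi => ?_⟩, fun h => h.1⟩
    have := hone i u v hi.1 hi.2
    subst this
    exact G.loopless.irrefl _ h
  obtain ⟨A, C, hAC, hanti, hA, hC⟩ := key
  rw [hdiv, Nat.cast_le] at hA hC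
  have hcard : ∀ A : Finset V', A.card ≤
      ∑ i, ((A.map (Function.Embedding.subtype _)).filter (fun v => v ∈ B i)).card := by
    intro A
    refine le_trans ?_ Finset.card_biUnion_le
    rw [← Finset.card_map (Function.Embedding.subtype _)]
    refine Finset.card_le_card ?_
    intro v hv
    obtain ⟨⟨u, i, hi⟩, hu, rfl⟩ := Finset.mem_map.1 hv
    simp only [Finset.mem_biUnion, Finset.mem_filter]
    exact ⟨i, Finset.mem_univ _, hv, hi⟩
  refine ⟨fun i => (A.map (Function.Embedding.subtype _)).filter (fun v => v ∈ B i),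
    fun i => (C.map (Function.Embedding.subtype _)).filter (fun v => v ∈ B i),
    fun i v hv => (Finset.mem_filter.1 hv).2, fun i v hv => (Finset.mem_filter.1 hv).2,
    fun i => ?_, ?_, hA.trans (hcard A), hC.trans (hcard C)⟩
  · exact Finset.disjoint_filter_filter ((Finset.disjoint_map _).2 hAC)
  · intro i j hij a ha c hc hadj
    obtain ⟨ha, hai⟩ := Finset.mem_filter.1 ha
    obtain ⟨hc, hcj⟩ := Finset.mem_filter.1 hc
    obtain ⟨a, haA, rfl⟩ := Finset.mem_map.1 ha
    obtain ⟨c, hcC, rfl⟩ := Finset.mem_map.1 hc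
    refine hanti a haA c hcC ⟨hadj, fun k hk => hij ?_⟩
    exact (uniq hai hk.1).trans (uniq hk.2 hcj)

/-! ### Balancing and counting -/

/-- Take a minimal `S` on which one of the two sums reaches `w`. Both sums over `S` are then less
than `2w`, so both sums over the complement exceed `2w`. -/
lemma exists_balanced {ι : Type} [Fintype ι] [DecidableEq ι] {w : ℕ} (hw0 : 0 < w)
    (a c : ι → ℕ) (ha : ∀ i, a i ≤ w) (hc : ∀ i, c i ≤ w)
    (hA : 4 * w ≤ ∑ i, a i) (hC : 4 * w ≤ ∑ i, c i) :
    ∃ S : Finset ι, w ≤ ∑ i ∈ S, a i ∧ w ≤ ∑ i ∈ Sᶜ, c i := by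
  obtain ⟨S, hS, hmin⟩ := Finset.exists_min_image
    (Finset.univ.filter (fun S : Finset ι => w ≤ ∑ i ∈ S, a i ∨ w ≤ ∑ i ∈ S, c i))
    Finset.card ⟨Finset.univ, by simp; omega⟩
  simp only [Finset.mem_filter, Finset.mem_univ, true_and] at hS hmin
  have hne : S.Nonempty := by
    rw [Finset.nonempty_iff_ne_empty]
    rintro rfl
    simp at hS; omega
  obtain ⟨i, hi⟩ := hne
  have hlt : ¬ (w ≤ ∑ i ∈ S.erase i, a i ∨ w ≤ ∑ i ∈ S.erase i, c i) := by
    intro h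
    have := hmin _ h
    have := Finset.card_erase_lt_of_mem hi
    omega
  have h1 := Finset.add_sum_erase S a hi
  have h2 := Finset.add_sum_erase S c hi
  have h3 := Finset.sum_add_sum_compl S a
  have h4 := Finset.sum_add_sum_compl S c
  have h5 := ha i
  have h6 := hc i
  rcases hS with h | h
  · exact ⟨S, h, by omega⟩
  · exact ⟨Sᶜ, by omega, by rw [compl_compl]; exact h⟩

/-- Two anticomplete blockades that are disjoint from and anticomplete to each other combine. -/
lemma anticomplete_append {V : Type} {G : SimpleGraph V} {k l : ℕ} {A : Fin k → Finset V}
    {C : Fin l → Finset V} (hA : AnticompleteBlockade G A) (hC : AnticompleteBlockade G C)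
    (h1 : ∀ i j, Disjoint (A i) (C j)) (h2 : ∀ i j, AnticompleteSets G (A i) (C j)) :
    AnticompleteBlockade G (Fin.append A C) := by
  constructor
  · intro i j hij
    induction i using Fin.addCases <;> induction j using Fin.addCases <;>
      simp only [Fin.append_left, Fin.append_right]
    · exact hA.1 _ _ (fun h => hij (by rw [h]))
    · exact h1 _ _
    · exact (h1 _ _).symm
    · exact hC.1 _ _ (fun h => hij (by rw [h]))
  · intro i j hij
    induction i using Fin.addCases <;> induction j using Fin.addCases <;>
      simp only [Fin.append_left, Fin.append_right]
    · exact hA.2 _ _ (fun h => hij (by rw [h]))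
    · exact h2 _ _
    · exact fun a ha b hb h => h2 _ _ b hb a ha h.symm
    · exact hC.2 _ _ (fun h => hij (by rw [h]))

lemma exists_disjoint_subsets {ι : Type} [DecidableEq ι] {I J : Finset ι} {N : ℕ}
    (hI : N ≤ I.card) (hJ : N ≤ J.card) (hIJ : 2 * N ≤ (I ∪ J).card) :
    ∃ I' J' : Finset ι, I' ⊆ I ∧ J' ⊆ J ∧ Disjoint I' J' ∧ I'.card = N ∧ J'.card = N := by
  by_cases h : N ≤ (I \ J).card
  · obtain ⟨I', h1, h2⟩ := Finset.exists_subset_card_eq h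
    obtain ⟨J', h3, h4⟩ := Finset.exists_subset_card_eq hJ
    exact ⟨I', J', h1.trans Finset.sdiff_subset, h3,
      disjoint_sdiff_self_left.mono h1 h3, h2, h4⟩
  · obtain ⟨I', h1, h2, h3⟩ := Finset.exists_subsuperset_card_eq
      (Finset.sdiff_subset : I \ J ⊆ I) (le_of_not_ge h) hI
    have h4 : (I ∪ J) \ I' ⊆ J \ I' := by
      intro x hx
      have := @h1 x
      simp only [Finset.mem_sdiff, Finset.mem_union] at hx this ⊢
      tauto
    have h5 : N ≤ (J \ I').card := by
      have := Finset.card_le_card h4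
      have := Finset.le_card_sdiff I' (I ∪ J)
      omega
    obtain ⟨J', h6, h7⟩ := Finset.exists_subset_card_eq h5
    exact ⟨I', J', h2, h6.trans Finset.sdiff_subset,
      disjoint_sdiff_self_right.mono_right h6, h3, h7⟩

/-- Splitting the sum of a function bounded by `w` according to a set `K` of indices, outside which
the function is at most `c * w / Q`. -/
lemma sum_bound {n N Q w c : ℕ} (hn : n = N * Q) (g : Fin n → ℕ) (K : Finset (Fin n)) (h1 : ∀ i, g i ≤ w)
    (h2 : ∀ i ∉ K, Q * g i ≤ c * w) : Q * ∑ i, g i ≤ K.card * (Q * w) + N * Q * (c * w) := by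
  subst hn
  rw [Finset.mul_sum, ← Finset.sum_add_sum_compl K]
  refine Nat.add_le_add ?_ ?_
  · refine (Finset.sum_le_card_nsmul _ _ (Q * w) fun i _ => Nat.mul_le_mul_left Q (h1 i)).trans ?_
    simp
  · refine (Finset.sum_le_card_nsmul _ _ (c * w) fun i hi => h2 i (Finset.mem_compl.1 hi)).trans ?_
    rw [smul_eq_mul]
    exact Nat.mul_le_mul_right _ (by simpa using Finset.card_le_univ Kᶜ)

/-- A family whose members indexed by `I` have size at least `w/Q` can be shrunk there to members of
a common size `w' ≥ w/Q`; the least such integer serves. -/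
lemma exists_shrink {V : Type} {n N Q w : ℕ} (hQ : 0 < Q) (A : Fin n → Finset V)
    (I : Finset (Fin n)) (hI : I.card = N) (hdense : ∀ i ∈ I, w ≤ Q * (A i).card) :
    ∃ (w' : ℕ) (φ : Fin N → Fin n) (A' : Fin N → Finset V), w ≤ Q * w' ∧
      Function.Injective φ ∧ (∀ i, φ i ∈ I) ∧ (∀ i, A' i ⊆ A (φ i)) ∧ ∀ i, (A' i).card = w' := by
  have hex : ∃ m, w ≤ Q * m := ⟨w, Nat.le_mul_of_pos_left w hQ⟩
  classical
  let φ := I.orderEmbOfFin hI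
  have hφ : ∀ i, φ i ∈ I := fun i => Finset.orderEmbOfFin_mem I hI i
  have : ∀ i, ∃ T ⊆ A (φ i), T.card = Nat.find hex := fun i =>
    Finset.exists_subset_card_eq (Nat.find_min' hex (hdense _ (hφ i)))
  choose A' h1 h2 using this
  exact ⟨Nat.find hex, φ, A', Nat.find_spec hex, φ.injective, hφ, h1, h2⟩

/-! ### The induction -/

/-- The theorem with `s = t + 1`, denominators cleared, and the additional conclusion that the new
blocks stay within the union of the old ones, which the induction needs. -/
lemma exists_blockade {α : Type} {F : SimpleGraph α} {d : ℕ} (hd : FGood F d)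
    {V : Type} [Fintype V] (G : SimpleGraph V) [DecidableRel G.Adj] (t : ℕ) :
    ∀ (n w : ℕ) (B : Fin n → Finset V), n = 2 * (2 * d ^ 2) ^ (t + 1) → IsBlockade B →
    (∀ i, (B i).card = w) →
    (∀ i j, i ≠ j → ∀ v ∈ B i,
      (2 * d ^ 2) ^ (t + 1) * ((B j).filter (fun a => G.Adj v a)).card ≤ 2 * w) →
    (¬ ∃ f : α → V, IsRainbowCopy G B F f) →
    ∃ A : Fin (2 ^ (t + 1)) → Finset V, AnticompleteBlockade G A ∧
      (∀ i, ∀ v ∈ A i, ∃ j, v ∈ B j) ∧ ∀ i, w ≤ (2 * d ^ 2) ^ t * (A i).card := by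
  classical
  have hd0 := hd.1
  have hQ : 0 < 2 * d ^ 2 := by positivity
  induction t with
  | zero =>
    intro n w B hn hB hw hsp hno
    rcases Nat.eq_zero_or_pos w with rfl | hw0
    · exact ⟨fun _ => ∅, ⟨fun _ _ _ => by simp, fun _ _ _ => by simp [AnticompleteSets]⟩,
        by simp, by simp⟩
    obtain ⟨A, C, hAB, hCB, hdisj, hanti, hA, hC⟩ := exists_split_s17 hd (p := 4)
      (q := (2 * d ^ 2) ^ (0 + 1)) (by rw [hn]; ring) hn le_rfl hw0 B hB hw hsp hno
    obtain ⟨S, h1, h2⟩ := exists_balanced hw0 (fun i => (A i).card) (fun i => (C i).card)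
      (fun i => hw i ▸ Finset.card_le_card (hAB i)) (fun i => hw i ▸ Finset.card_le_card (hCB i))
      hA hC
    rw [← Finset.card_biUnion
      (fun i _ j _ hij => (hB i j hij).mono (hAB i) (hAB j))] at h1
    rw [← Finset.card_biUnion
      (fun i _ j _ hij => (hB i j hij).mono (hCB i) (hCB j))] at h2
    have single : ∀ X : Finset V, AnticompleteBlockade G (fun _ : Fin 1 => X) := fun X =>
      ⟨fun i j h => absurd (Subsingleton.elim i j) h, fun i j h => absurd (Subsingleton.elim i j) h⟩
    refine ⟨Fin.append (fun _ : Fin 1 => S.biUnion A) (fun _ : Fin 1 => Sᶜ.biUnion C),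
      anticomplete_append (single _) (single _) (fun _ _ => ?_) (fun _ _ => ?_), ?_, ?_⟩
    · simp only [Finset.disjoint_biUnion_left, Finset.disjoint_biUnion_right]
      intro i hi j hj
      refine (hB j i ?_).mono (hAB j) (hCB i)
      rintro rfl
      simp_all
    · intro a ha c hc
      simp only [Finset.mem_biUnion] at ha hc
      obtain ⟨i, hi, ha⟩ := ha
      obtain ⟨j, hj, hc⟩ := hc
      refine hanti i j ?_ a ha c hc
      rintro rfl
      simp_all
    · intro (i : Fin (1 + 1))
      induction i using Fin.addCases <;>
        simp only [Fin.append_left, Fin.append_right, Finset.mem_biUnion]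
      · rintro v ⟨j, -, hj⟩; exact ⟨j, hAB j hj⟩
      · rintro v ⟨j, -, hj⟩; exact ⟨j, hCB j hj⟩
    · intro (i : Fin (1 + 1))
      induction i using Fin.addCases <;>
        simp only [Fin.append_left, Fin.append_right, pow_zero, one_mul]
      · exact h1
      · exact h2
  | succ t ih =>
    intro n w B hn hB hw hsp hno
    rcases Nat.eq_zero_or_pos w with rfl | hw0
    · exact ⟨fun _ => ∅, ⟨fun _ _ _ => by simp, fun _ _ _ => by simp [AnticompleteSets]⟩,
        by simp, by simp⟩
    obtain ⟨A, C, hAB, hCB, hdisj, hanti, hA, hC⟩ := exists_split_s17 hd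
      (p := 4 * (2 * d ^ 2) ^ (t + 1)) (q := (2 * d ^ 2) ^ (t + 1 + 1))
      (by rw [hn]; ring) hn (Nat.le_mul_of_pos_right 4 (by positivity)) hw0 B hB hw hsp hno
    generalize hQdef : 2 * d ^ 2 = Q at *
    obtain ⟨N, hN⟩ : ∃ N, N = 2 * Q ^ (t + 1) := ⟨_, rfl⟩
    have hnN : n = N * Q := by rw [hn, hN]; ring
    have hpN : 4 * Q ^ (t + 1) = 2 * N := by rw [hN]; ring
    rw [hpN] at hA hC
    have hcA : ∀ i, (A i).card ≤ w := fun i => hw i ▸ Finset.card_le_card (hAB i)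
    have hcC : ∀ i, (C i).card ≤ w := fun i => hw i ▸ Finset.card_le_card (hCB i)
    have hcAC : ∀ i, (A i).card + (C i).card ≤ w := fun i => by
      rw [← Finset.card_union_of_disjoint (hdisj i), ← hw i]
      exact Finset.card_le_card (Finset.union_subset (hAB i) (hCB i))
    let I := Finset.univ.filter (fun i => w ≤ Q * (A i).card)
    let J := Finset.univ.filter (fun i => w ≤ Q * (C i).card)
    have hQw : 0 < Q * w := Nat.mul_pos hQ hw0
    have hI : N ≤ I.card := by
      have h := sum_bound hnN (c := 1) (fun i => (A i).card) I hcA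
        (fun i hi => by simp [I] at hi; omega)
      have h' := Nat.mul_le_mul_left Q hA
      refine Nat.le_of_mul_le_mul_right ?_ hQw
      nlinarith
    have hJ : N ≤ J.card := by
      have h := sum_bound hnN (c := 1) (fun i => (C i).card) J hcC
        (fun i hi => by simp [J] at hi; omega)
      have h' := Nat.mul_le_mul_left Q hC
      refine Nat.le_of_mul_le_mul_right ?_ hQw
      nlinarith
    have hIJ : 2 * N ≤ (I ∪ J).card := by
      have h := sum_bound hnN (c := 2) (fun i => (A i).card + (C i).card) (I ∪ J) hcAC
        (fun i hi => by simp [I, J] at hi; rw [mul_add]; omega)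
      rw [Finset.sum_add_distrib] at h
      have h' := Nat.mul_le_mul_left Q (Nat.add_le_add hA hC)
      refine Nat.le_of_mul_le_mul_right ?_ hQw
      nlinarith
    obtain ⟨I', J', hI', hJ', hdIJ, hcI, hcJ⟩ := exists_disjoint_subsets hI hJ hIJ
    -- one application of the inductive hypothesis, used for both sides
    have side : ∀ (X : Fin n → Finset V) (K : Finset (Fin n)), K.card = N →
        (∀ i, X i ⊆ B i) → (∀ i ∈ K, w ≤ Q * (X i).card) →
        ∃ R : Fin (2 ^ (t + 1)) → Finset V, AnticompleteBlockade G R ∧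
          (∀ i, ∀ v ∈ R i, ∃ j ∈ K, v ∈ X j) ∧ ∀ i, w ≤ Q ^ (t + 1) * (R i).card := by
      intro X K hK hXB hdense
      obtain ⟨w', φ, X', hww', hφ, hφK, hX', hcX'⟩ := exists_shrink hQ X K hK hdense
      have hsp' : ∀ i j, i ≠ j → ∀ v ∈ X' i,
          Q ^ (t + 1) * ((X' j).filter (fun a => G.Adj v a)).card ≤ 2 * w' := by
        intro i j hij v hv
        have h := hsp (φ i) (φ j) (fun h => hij (hφ h)) v (hXB _ (hX' i hv))
        have hle : ((X' j).filter (fun a => G.Adj v a)).card ≤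
            ((B (φ j)).filter (fun a => G.Adj v a)).card :=
          Finset.card_le_card (Finset.filter_subset_filter _ ((hX' j).trans (hXB _)))
        have h' := Nat.mul_le_mul_left (Q ^ (t + 1 + 1)) hle
        refine Nat.le_of_mul_le_mul_left ?_ hQ
        calc _ = Q ^ (t + 1 + 1) * ((X' j).filter (fun a => G.Adj v a)).card := by ring
          _ ≤ 2 * w := h'.trans h
          _ ≤ 2 * (Q * w') := Nat.mul_le_mul_left 2 hww'
          _ = _ := by ring
      have hno' : ¬ ∃ f : α → V, IsRainbowCopy G X' F f := by
        rintro ⟨f, hf⟩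
        exact hno ⟨f, rainbow_of_sub hB φ hφ (fun i => (hX' i).trans (hXB _)) hf⟩
      obtain ⟨R, hR1, hR2, hR3⟩ := ih N w' X' hN
        (fun i j hij => (hB _ _ (fun h => hij (hφ h))).mono ((hX' i).trans (hXB _))
          ((hX' j).trans (hXB _))) hcX' hsp' hno'
      refine ⟨R, hR1, fun i v hv => ?_, fun i => ?_⟩
      · obtain ⟨j, hj⟩ := hR2 i v hv
        exact ⟨φ j, hφK j, hX' j hj⟩
      · calc w ≤ Q * w' := hww'
          _ ≤ Q * (Q ^ t * (R i).card) := Nat.mul_le_mul_left Q (hR3 i)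
          _ = _ := by ring
    obtain ⟨R, hR1, hR2, hR3⟩ := side A I' hcI hAB
      (fun i hi => (Finset.mem_filter.1 (hI' hi)).2)
    obtain ⟨T, hT1, hT2, hT3⟩ := side C J' hcJ hCB
      (fun i hi => (Finset.mem_filter.1 (hJ' hi)).2)
    have hne : ∀ {i j}, i ∈ I' → j ∈ J' → i ≠ j := fun hi hj h =>
      Finset.disjoint_left.1 hdIJ hi (h ▸ hj)
    have happ := anticomplete_append hR1 hT1
      (fun i j => by
        rw [Finset.disjoint_left]
        intro v hv hv'
        obtain ⟨a, ha, hva⟩ := hR2 i v hv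
        obtain ⟨b, hb, hvb⟩ := hT2 j v hv'
        exact Finset.disjoint_left.1 (hB a b (hne ha hb)) (hAB a hva) (hCB b hvb))
      (fun i j v hv u hu => by
        obtain ⟨a, ha, hva⟩ := hR2 i v hv
        obtain ⟨b, hb, hvb⟩ := hT2 j u hu
        exact hanti a b (hne ha hb) v hva u hvb)
    have hlen : 2 ^ (t + 1 + 1) = 2 ^ (t + 1) + 2 ^ (t + 1) := by ring
    rw [hlen]
    refine ⟨_, happ, fun i => ?_, fun i => ?_⟩
    · induction i using Fin.addCases <;> simp only [Fin.append_left, Fin.append_right]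
      · intro v hv; obtain ⟨j, -, hj⟩ := hR2 _ v hv; exact ⟨j, hAB j hj⟩
      · intro v hv; obtain ⟨j, -, hj⟩ := hT2 _ v hv; exact ⟨j, hCB j hj⟩
    · induction i using Fin.addCases <;> simp only [Fin.append_left, Fin.append_right]
      · exact hR3 _
      · exact hT3 _

theorem stmt17 (α : Type) [Fintype α] (F : SimpleGraph α) (hF : F.IsAcyclic)
    (d : ℕ) (hd : FGood F d) (s : ℕ) (hs : 1 ≤ s)
    (V : Type) [Fintype V] (G : SimpleGraph V) [DecidableRel G.Adj]
    (B : Fin (2 * (2 * d ^ 2) ^ s) → Finset V) (w : ℕ)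
    (hblock : IsBlockade B) (hw : ∀ i, (B i).card = w)
    (hsparse : SymSparse G (2 / ((2 * (d : ℝ) ^ 2) ^ s)) B)
    (hnorainbow : ¬ ∃ f : α → V, IsRainbowCopy G B F f) :
    ∃ (k' : ℕ) (A : Fin k' → Finset V), AnticompleteBlockade G A ∧ 2 ^ s ≤ k' ∧
      ∀ i, (w : ℝ) / (2 * (d : ℝ) ^ 2) ^ (s - 1) ≤ (A i).card := by
  obtain ⟨t, rfl⟩ : ∃ t, s = t + 1 := ⟨s - 1, by omega⟩
  have hd0 := hd.1
  have hQ : (0 : ℝ) < 2 * (d : ℝ) ^ 2 := by positivity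
  obtain ⟨A, hA1, -, hA3⟩ := exists_blockade hd G t _ w B rfl hblock hw
    (fun i j hij v hv => by
      have h := hsparse i j hij v hv
      rw [hw j, div_mul_eq_mul_div, le_div_iff₀ (by positivity), mul_comm] at h
      exact_mod_cast h) hnorainbow
  refine ⟨_, A, hA1, le_rfl, fun i => ?_⟩
  rw [Nat.add_sub_cancel, div_le_iff₀ (by positivity), mul_comm]
  exact_mod_cast hA3 i
end
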